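/- Let δ21 = X² + 2X + 2, δ41 = X⁴ + 2X³ + 2X² + 4X + 4, δ81 = X⁸ + 4X⁷ + 6X⁶ + 4X⁵ + 2X⁴ + 8X³ + 24X² + 32X + 16, and δ82 = X⁸ + 2X⁶ + 4X⁵ + 2X⁴ + 8X³ + 8X² + 16. Then for every odd n ≥ 4, F_2(n,1,0,0,0) = 2^{n−4} − (1/16)·E, where E = 4ρ_n(δ21) + ρ_n(δ41) + ρ_n(δ81) + ρ_n(δ82) if n ≡ 1 (mod 8); E = 2ρ_n(δ21) − ρ_n(δ41) − ρ_n(δ81) + ρ_n(δ82) if n ≡ 3 (mod 8); E = ρ_n(δ41) − ρ_n(δ81) − ρ_n(δ82) if n ≡ 5 (mod 8); and E = −2ρ_n(δ21) − ρ_n(δ41) + ρ_n(δ81) − ρ_n(δ82) if n ≡ 7 (mod 8). The equality is between complex numbers, the count being viewed in ℂ. -/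

import Mathlib

open Polynomial

/-- For a finite field `K` with `2^n` elements, the `k`-th trace function
`T_k(a) = Σ_S ∏_{i ∈ S} a^(2^i)`, the sum over all `k`-element subsets `S` of `{0,…,n-1}`. -/
noncomputable def traceFn (q n k : ℕ) {K : Type*} [CommRing K] (a : K) : K :=
  ∑ S ∈ Finset.powersetCard k (Finset.range n), ∏ i ∈ S, a ^ (q ^ i)

/-- `ρ_n(γ)`: the sum of the `n`-th powers of the complex roots of `γ ∈ ℤ[X]`,
counted with multiplicity. -/
noncomputable def rho (n : ℕ) (γ : Polynomial ℤ) : ℂ :=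
  ((γ.map (Int.castRingHom ℂ)).roots.map (· ^ n)).sum

/-- `F_2(n,t₁,t₂,t₃,t₄)`: the number of `a` in the field `K` (of `2^n` elements)
with `T_k(a) = t_k` for `k = 1,2,3,4`. -/
noncomputable def cnt4 (n : ℕ) (K : Type) [Field K] [Fintype K] (t1 t2 t3 t4 : K) : ℕ :=
  Nat.card {a : K // traceFn 2 n 1 a = t1 ∧ traceFn 2 n 2 a = t2 ∧
    traceFn 2 n 3 a = t3 ∧ traceFn 2 n 4 a = t4}

noncomputable def d21 : Polynomial ℤ := X ^ 2 + 2 * X + 2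
noncomputable def d41 : Polynomial ℤ := X ^ 4 + 2 * X ^ 3 + 2 * X ^ 2 + 4 * X + 4
noncomputable def d81 : Polynomial ℤ :=
  X ^ 8 + 4 * X ^ 7 + 6 * X ^ 6 + 4 * X ^ 5 + 2 * X ^ 4 + 8 * X ^ 3 + 24 * X ^ 2 + 32 * X + 16
noncomputable def d82 : Polynomial ℤ :=
  X ^ 8 + 2 * X ^ 6 + 4 * X ^ 5 + 2 * X ^ 4 + 8 * X ^ 3 + 8 * X ^ 2 + 16

set_option linter.unusedSimpArgs false
set_option linter.unusedVariables false



noncomputable def Mon : ℕ → Finset (Polynomial (ZMod 2))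
  | 0 => {1}
  | d + 1 => (Mon d ×ˢ (Finset.univ : Finset (ZMod 2))).image (fun p => X * p.1 + C p.2)

theorem mon_inj : Function.Injective
    (fun p : (Polynomial (ZMod 2)) × ZMod 2 => X * p.1 + C p.2) := by
  rintro ⟨f, a⟩ ⟨g, b⟩ h
  have h' : X * f + C a = X * g + C b := h
  have h0 : a = b := by simpa using congrArg (fun p => Polynomial.coeff p 0) h'
  subst h0
  have : f = g := by
    have := add_right_cancel h'
    exact mul_left_cancel₀ X_ne_zero this
  rw [this]

theorem mem_mon (d : ℕ) : ∀ f : Polynomial (ZMod 2), f ∈ Mon d ↔ f.Monic ∧ f.natDegree = d := by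
  induction d with
  | zero =>
    intro f
    simp only [Mon, Finset.mem_singleton]
    constructor
    · rintro rfl; simp
    · rintro ⟨h1, h2⟩; exact h1.natDegree_eq_zero.mp h2
  | succ d ih =>
    intro f
    simp only [Mon, Finset.mem_image, Finset.mem_product, Finset.mem_univ, and_true, Prod.exists]
    constructor
    · rintro ⟨g, b, hg, rfl⟩
      obtain ⟨h1, h2⟩ := (ih g).1 hg
      have hm : (X * g).Monic := monic_X.mul h1
      have hd : (X * g).natDegree = d + 1 := by
        rw [natDegree_X_mul h1.ne_zero, h2]
      constructor
      · apply hm.add_of_left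
        refine lt_of_le_of_lt degree_C_le ?_
        rw [degree_eq_natDegree hm.ne_zero, hd]
        exact_mod_cast Nat.succ_pos d
      · rw [natDegree_add_C, hd]
    · rintro ⟨h1, h2⟩
      refine ⟨f.divX, f.coeff 0, (ih _).2 ⟨?_, ?_⟩, X_mul_divX_add f⟩
      · rw [Monic, leadingCoeff, natDegree_divX_eq_natDegree_tsub_one, coeff_divX, h2]
        have := h1.coeff_natDegree
        rw [h2] at this
        simpa using this
      · rw [natDegree_divX_eq_natDegree_tsub_one, h2]; rfl

theorem sum_mon_succ (d : ℕ) (φ : Polynomial (ZMod 2) → ℂ) :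
    ∑ f ∈ Mon (d + 1), φ f = ∑ g ∈ Mon d, (φ (X * g) + φ (X * g + 1)) := by
  rw [Mon, Finset.sum_image (fun x _ y _ h => mon_inj h), Finset.sum_product]
  apply Finset.sum_congr rfl
  intro g _
  have : (Finset.univ : Finset (ZMod 2)) = {0, 1} := by decide
  rw [this, Finset.sum_pair (by decide)]
  simp

open Classical in
noncomputable def Irr (N : ℕ) : Finset (Polynomial (ZMod 2)) :=
  ((Finset.range (N + 1)).biUnion Mon).filter Irreducible

theorem mem_irr (N : ℕ) (f : Polynomial (ZMod 2)) :
    f ∈ Irr N ↔ f.Monic ∧ Irreducible f ∧ f.natDegree ≤ N := by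
  simp only [Irr, Finset.mem_filter, Finset.mem_biUnion, Finset.mem_range, mem_mon]
  constructor
  · rintro ⟨⟨d, h1, h2, h3⟩, h4⟩
    exact ⟨h2, h4, by omega⟩
  · rintro ⟨h2, h4, h5⟩
    exact ⟨⟨_, by omega, h2, rfl⟩, h4⟩

/-- Prime-power sums. -/
noncomputable def Lam (ψ : Polynomial (ZMod 2) → ℂ) (k : ℕ) : ℂ :=
  ∑ P ∈ (Irr k).filter (fun P => P.natDegree ∣ k), (P.natDegree : ℂ) * ψ P ^ (k / P.natDegree)

theorem Lam_eq (ψ : Polynomial (ZMod 2) → ℂ) (k N : ℕ) (hk : 1 ≤ k) (hN : k ≤ N) :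
    Lam ψ k = ∑ P ∈ Irr N, if P.natDegree ∣ k then
      (P.natDegree : ℂ) * ψ P ^ (k / P.natDegree) else 0 := by
  rw [← Finset.sum_filter, Lam]
  apply Finset.sum_congr _ (fun _ _ => rfl)
  ext P
  simp only [Finset.mem_filter, mem_irr]
  constructor
  · rintro ⟨⟨h1, h2, h3⟩, h4⟩; exact ⟨⟨h1, h2, h3.trans hN⟩, h4⟩
  · rintro ⟨⟨h1, h2, h3⟩, h4⟩; exact ⟨⟨h1, h2, Nat.le_of_dvd hk h4⟩, h4⟩

open Classical in
theorem degree_eq_sum (d : ℕ) (f : Polynomial (ZMod 2)) (hf : f ∈ Mon d) :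
    d = ∑ P ∈ Irr d, ∑ k ∈ Finset.Icc 1 d,
      if P.natDegree ∣ k ∧ P ^ (k / P.natDegree) ∣ f then P.natDegree else 0 := by
  obtain ⟨hm, hd⟩ := (mem_mon d f).1 hf
  have hf0 := hm.ne_zero
  set s := UniqueFactorizationMonoid.normalizedFactors f with hs
  have hprod : s.prod = f := by
    have h1 := UniqueFactorizationMonoid.prod_normalizedFactors_eq hf0
    rw [← hs, hm.normalize_eq_self] at h1
    exact h1
  have hsP : ∀ P ∈ s, P.Monic ∧ Irreducible P ∧ P.natDegree ≤ d := by
    intro P hP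
    have hirr := UniqueFactorizationMonoid.irreducible_of_normalized_factor P hP
    refine ⟨?_, hirr, ?_⟩
    · have h1 := UniqueFactorizationMonoid.normalize_normalized_factor P hP
      rw [← h1]
      exact monic_normalize hirr.ne_zero
    · rw [← hd]
      exact natDegree_le_of_dvd (UniqueFactorizationMonoid.dvd_of_mem_normalizedFactors hP) hf0
  have hdeg : d = ∑ P ∈ Irr d, s.count P * P.natDegree := by
    have h1 : f.natDegree = (s.map natDegree).sum := by
      conv_lhs => rw [← hprod]
      apply natDegree_multiset_prod
      intro h0
      exact (hsP 0 h0).2.1.ne_zero rfl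
    refine hd.symm.trans (h1.trans ?_)
    rw [Finset.sum_multiset_map_count]
    have hsub : s.toFinset ⊆ Irr d := by
      intro P hP
      rw [mem_irr]; exact hsP P (Multiset.mem_toFinset.1 hP)
    rw [Finset.sum_subset hsub]
    · simp
    · intro P _ hP
      rw [Multiset.count_eq_zero_of_notMem (fun h => hP (Multiset.mem_toFinset.2 h))]; simp
  conv_lhs => rw [hdeg]
  apply Finset.sum_congr rfl
  intro P hP
  obtain ⟨hPm, hPi, hPd⟩ := (mem_irr _ _).1 hP
  have hpos : 0 < P.natDegree := hPi.natDegree_pos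
  have hdvd : ∀ j, P ^ j ∣ f ↔ j ≤ s.count P := by
    intro j
    rw [UniqueFactorizationMonoid.dvd_iff_normalizedFactors_le_normalizedFactors
      (pow_ne_zero _ hPi.ne_zero) hf0, UniqueFactorizationMonoid.normalizedFactors_pow,
      UniqueFactorizationMonoid.normalizedFactors_irreducible hPi, hPm.normalize_eq_self,
      Multiset.nsmul_singleton, ← Multiset.le_count_iff_replicate_le]
  rw [← Finset.sum_filter, Finset.sum_const, smul_eq_mul]
  congr 1
  have : (Finset.Icc 1 d).filter (fun k => P.natDegree ∣ k ∧ P ^ (k / P.natDegree) ∣ f)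
      = (Finset.Icc 1 (s.count P)).image (fun j => P.natDegree * j) := by
    ext k
    simp only [Finset.mem_filter, Finset.mem_Icc, Finset.mem_image]
    constructor
    · rintro ⟨⟨h1, h2⟩, ⟨j, rfl⟩, h4⟩
      rw [Nat.mul_div_cancel_left _ hpos, hdvd] at h4
      refine ⟨j, ⟨?_, h4⟩, rfl⟩
      rcases Nat.eq_zero_or_pos j with h | h
      · subst h; simp at h1
      · exact h
    · rintro ⟨j, ⟨h1, h2⟩, rfl⟩
      have h3 := (hdvd j).2 h2
      refine ⟨⟨Nat.mul_pos hpos h1, ?_⟩, Dvd.intro _ rfl, ?_⟩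
      · have := natDegree_le_of_dvd h3 hf0
        rw [hPm.natDegree_pow, hd, mul_comm] at this
        exact this
      · rwa [Nat.mul_div_cancel_left _ hpos]
  rw [this, Finset.card_image_of_injective]
  · simp
  · intro a b h
    exact Nat.eq_of_mul_eq_mul_left hpos h

structure IsMul (ψ : Polynomial (ZMod 2) → ℂ) : Prop where
  one : ψ 1 = 1
  mul : ∀ f g : Polynomial (ZMod 2), f.Monic → g.Monic → ψ (f * g) = ψ f * ψ g

theorem IsMul.pow {ψ : Polynomial (ZMod 2) → ℂ} (h : IsMul ψ) (f : Polynomial (ZMod 2))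
    (hf : f.Monic) (j : ℕ) : ψ (f ^ j) = ψ f ^ j := by
  induction j with
  | zero => simp [h.one]
  | succ j ih => rw [pow_succ, h.mul _ _ (hf.pow j) hf, ih, pow_succ]

noncomputable def cs (ψ : Polynomial (ZMod 2) → ℂ) (d : ℕ) : ℂ := ∑ f ∈ Mon d, ψ f

open Classical in
theorem sum_dvd {ψ : Polynomial (ZMod 2) → ℂ} (h : IsMul ψ) (d k : ℕ) (hk : k ≤ d)
    (g : Polynomial (ZMod 2)) (hg : g ∈ Mon k) :
    (∑ f ∈ Mon d, if g ∣ f then ψ f else 0) = ψ g * cs ψ (d - k) := by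
  obtain ⟨hgm, hgd⟩ := (mem_mon _ _).1 hg
  rw [← Finset.sum_filter, cs, Finset.mul_sum]
  symm
  apply Finset.sum_bij (fun q _ => g * q)
  · intro q hq
    obtain ⟨hqm, hqd⟩ := (mem_mon _ _).1 hq
    rw [Finset.mem_filter, mem_mon]
    refine ⟨⟨hgm.mul hqm, ?_⟩, Dvd.intro _ rfl⟩
    rw [hgm.natDegree_mul hqm, hgd, hqd]; omega
  · intro a _ b _ hab
    exact mul_left_cancel₀ hgm.ne_zero hab
  · intro f hf
    rw [Finset.mem_filter, mem_mon] at hf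
    obtain ⟨⟨hfm, hfd⟩, q, rfl⟩ := hf
    have hqm : q.Monic := hgm.of_mul_monic_left hfm
    refine ⟨q, ?_, rfl⟩
    rw [mem_mon]
    refine ⟨hqm, ?_⟩
    rw [hgm.natDegree_mul hqm] at hfd; omega
  · intro q hq
    rw [h.mul _ _ hgm ((mem_mon _ _).1 hq).1]

theorem newton {ψ : Polynomial (ZMod 2) → ℂ} (h : IsMul ψ) (d : ℕ) :
    (d : ℂ) * cs ψ d = ∑ k ∈ Finset.Icc 1 d, Lam ψ k * cs ψ (d - k) := by
  classical
  have h1 : (d : ℂ) * cs ψ d = ∑ f ∈ Mon d, ∑ P ∈ Irr d, ∑ k ∈ Finset.Icc 1 d,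
      (if P.natDegree ∣ k then (P.natDegree : ℂ) else 0) *
        (if P ^ (k / P.natDegree) ∣ f then ψ f else 0) := by
    rw [cs, Finset.mul_sum]
    apply Finset.sum_congr rfl
    intro f hf
    have := congrArg (fun x : ℕ => (x : ℂ)) (degree_eq_sum d f hf)
    simp only [Nat.cast_sum] at this
    rw [this, Finset.sum_mul]
    apply Finset.sum_congr rfl
    intro P _
    rw [Finset.sum_mul]
    apply Finset.sum_congr rfl
    intro k _
    by_cases ha : P.natDegree ∣ k <;> by_cases hb : P ^ (k / P.natDegree) ∣ f <;> simp [ha, hb]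
  rw [h1]
  have h2 : ∀ k ∈ Finset.Icc 1 d, Lam ψ k * cs ψ (d - k) = ∑ P ∈ Irr d,
      (if P.natDegree ∣ k then (P.natDegree : ℂ) * ψ P ^ (k / P.natDegree) else 0)
        * cs ψ (d - k) := by
    intro k hk
    obtain ⟨hk1, hk2⟩ := Finset.mem_Icc.1 hk
    rw [Lam_eq ψ k d hk1 hk2, Finset.sum_mul]
  rw [Finset.sum_congr rfl h2]
  conv_lhs => rw [Finset.sum_comm]
  conv_rhs => rw [Finset.sum_comm]
  apply Finset.sum_congr rfl
  intro P hP
  obtain ⟨hPm, hPi, hPd⟩ := (mem_irr _ _).1 hP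
  rw [Finset.sum_comm]
  apply Finset.sum_congr rfl
  intro k hk
  obtain ⟨hk1, hk2⟩ := Finset.mem_Icc.1 hk
  rw [← Finset.mul_sum]
  by_cases ha : P.natDegree ∣ k
  · rw [if_pos ha, if_pos ha, sum_dvd h d k hk2 (P ^ (k / P.natDegree)), h.pow P hPm]
    · ring
    · rw [mem_mon]
      refine ⟨hPm.pow _, ?_⟩
      rw [hPm.natDegree_pow, Nat.div_mul_cancel ha]
  · rw [if_neg ha, if_neg ha]; simp


section B
variable {n : ℕ} {K : Type} [Field K] [Fintype K]

theorem pow_dvd_aux [Algebra (ZMod 2) K] (a : K) (k : ℕ) :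
    a ^ 2 ^ k = a ↔ (minpoly (ZMod 2) a).natDegree ∣ k := by
  have h_int : IsIntegral (ZMod 2) a := Algebra.IsIntegral.isIntegral a
  rw [(minpoly.irreducible h_int).natDegree_dvd_iff_dvd_X_pow_card_pow_sub_X, minpoly.dvd_iff]
  simp [sub_eq_zero]

theorem minpoly_eq_prod [Algebra (ZMod 2) K] (a : K) :
    (minpoly (ZMod 2) a).map (algebraMap (ZMod 2) K) =
      ∏ i ∈ Finset.range (minpoly (ZMod 2) a).natDegree, (X - C (a ^ 2 ^ i)) := by
  have : CharP K 2 := charP_of_injective_algebraMap (algebraMap (ZMod 2) K).injective 2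
  have h_int : IsIntegral (ZMod 2) a := Algebra.IsIntegral.isIntegral a
  set m := (minpoly (ZMod 2) a).natDegree with hm
  have hmon := (minpoly.monic h_int).map (algebraMap (ZMod 2) K)
  apply eq_of_monic_of_dvd_of_natDegree_le (monic_prod_X_sub_C _ _) hmon
  · apply Finset.prod_dvd_of_coprime
    · intro i hi j hj hij
      apply isCoprime_X_sub_C_of_isUnit_sub
      rw [isUnit_iff_ne_zero, sub_ne_zero]
      have key : ∀ i j : ℕ, i < j → j < m → a ^ 2 ^ i ≠ a ^ 2 ^ j := by
        intro i j h1 h2 h3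
        obtain ⟨t, rfl⟩ := Nat.exists_eq_add_of_lt h1
        have h4 : (a ^ 2 ^ (t + 1)) ^ 2 ^ i = a ^ 2 ^ i := by
          rw [← pow_mul, ← pow_add, h3]; congr 2; omega
        have h5 : a ^ 2 ^ (t + 1) = a := by
          have := iterateFrobenius_inj K 2 i
          apply this
          simpa [iterateFrobenius_def] using h4
        rw [pow_dvd_aux, ← hm] at h5
        have := Nat.le_of_dvd (by omega) h5
        omega
      simp only [Finset.coe_range, Set.mem_Iio] at hi hj
      rcases lt_or_gt_of_ne hij with h | h
      · exact key i j h hj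
      · exact (key j i h hi).symm
    · intro i _
      rw [dvd_iff_isRoot, IsRoot, eval_map_algebraMap]
      have h1 := minpoly.aeval (ZMod 2) a
      have h2 : ∀ i, aeval (a ^ 2 ^ i) (minpoly (ZMod 2) a) = 0 := by
        intro i
        induction i with
        | zero => simpa using h1
        | succ i ih =>
          have := congrArg (FiniteField.frobeniusAlgHom (ZMod 2) K) ih
          rw [← aeval_algHom_apply, map_zero] at this
          simpa [← pow_mul, ← pow_succ] using this
      exact h2 i
  · rw [natDegree_finset_prod_X_sub_C_eq_card, Finset.card_range, natDegree_map]

theorem charpoly_eq_aux [Algebra (ZMod 2) K] (a : K) (k : ℕ) :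
    ((minpoly (ZMod 2) a) ^ k).map (algebraMap (ZMod 2) K) =
      ∏ i ∈ Finset.range (k * (minpoly (ZMod 2) a).natDegree), (X - C (a ^ 2 ^ i)) := by
  induction k with
  | zero => simp
  | succ k ih =>
    rw [pow_succ, Polynomial.map_mul, ih, minpoly_eq_prod, Nat.add_one_mul, Finset.prod_range_add]
    congr 1
    apply Finset.prod_congr rfl
    intro i _
    rw [pow_add, pow_mul, (pow_dvd_aux a _).2 (Dvd.intro_left k rfl)]

theorem natDegree_minpoly_dvd [Algebra (ZMod 2) K] (hK : Fintype.card K = 2 ^ n) (a : K) :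
    (minpoly (ZMod 2) a).natDegree ∣ n := by
  rw [← pow_dvd_aux, ← hK, FiniteField.pow_card]

/-- The characteristic polynomial of `a`. -/
noncomputable def chp (n : ℕ) {K : Type} [Field K] [Algebra (ZMod 2) K] (a : K) :
    Polynomial (ZMod 2) :=
  (minpoly (ZMod 2) a) ^ (n / (minpoly (ZMod 2) a).natDegree)

theorem chp_mon [Algebra (ZMod 2) K] (hK : Fintype.card K = 2 ^ n) (a : K) :
    chp n a ∈ Mon n := by
  have h_int : IsIntegral (ZMod 2) a := Algebra.IsIntegral.isIntegral a
  rw [mem_mon]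
  refine ⟨(minpoly.monic h_int).pow _, ?_⟩
  rw [chp, (minpoly.monic h_int).natDegree_pow, Nat.div_mul_cancel (natDegree_minpoly_dvd hK a)]

theorem chp_coeff [Algebra (ZMod 2) K] (hK : Fintype.card K = 2 ^ n) (a : K) (k : ℕ)
    (hk : k ≤ n) :
    algebraMap (ZMod 2) K ((chp n a).reverse.coeff k) = traceFn 2 n k a := by
  have : CharP K 2 := charP_of_injective_algebraMap (algebraMap (ZMod 2) K).injective 2
  obtain ⟨h1, h2⟩ := (mem_mon _ _).1 (chp_mon hK a)
  rw [coeff_reverse, h2, revAt_le hk, ← coeff_map, chp, charpoly_eq_aux,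
    Nat.div_mul_cancel (natDegree_minpoly_dvd hK a)]
  have : ∀ i ∈ Finset.range n, (X - C (a ^ 2 ^ i) : K[X]) = X + C (a ^ 2 ^ i) := by
    intro i _
    rw [CharTwo.sub_eq_add]
  rw [Finset.prod_congr rfl this, Finset.prod_X_add_C_coeff _ _ (by simp), traceFn,
    Finset.card_range]
  congr 2
  omega

theorem sum_chp [Algebra (ZMod 2) K] (hn : 1 ≤ n) (hK : Fintype.card K = 2 ^ n)
    {ψ : Polynomial (ZMod 2) → ℂ} (h : IsMul ψ) :
    ∑ a : K, ψ (chp n a) = Lam ψ n := by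
  classical
  have hmaps : ∀ a ∈ (Finset.univ : Finset K), minpoly (ZMod 2) a ∈
      (Irr n).filter (fun P => P.natDegree ∣ n) := by
    intro a _
    have h_int : IsIntegral (ZMod 2) a := Algebra.IsIntegral.isIntegral a
    have hd := natDegree_minpoly_dvd hK a
    rw [Finset.mem_filter, mem_irr]
    exact ⟨⟨minpoly.monic h_int, minpoly.irreducible h_int, Nat.le_of_dvd hn hd⟩, hd⟩
  rw [← Finset.sum_fiberwise_of_maps_to hmaps, Lam]
  apply Finset.sum_congr rfl
  intro P hP
  rw [Finset.mem_filter, mem_irr] at hP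
  obtain ⟨⟨hPm, hPi, -⟩, hPn⟩ := hP
  have h1 : ∀ a ∈ (Finset.univ : Finset K).filter (fun a => minpoly (ZMod 2) a = P),
      ψ (chp n a) = ψ P ^ (n / P.natDegree) := by
    intro a ha
    rw [Finset.mem_filter] at ha
    rw [chp, ha.2, h.pow _ hPm]
  rw [Finset.sum_congr rfl h1, Finset.sum_const, nsmul_eq_mul]
  congr 2
  have hsep : P.Separable := PerfectField.separable_of_irreducible hPi
  have hsplit : (P.map (algebraMap (ZMod 2) K)).Splits := by
    have h3 := FiniteField.splits_X_pow_card_sub_X 2 (K := K)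
    rw [hK] at h3
    have h4 := (hPi.natDegree_dvd_iff_dvd_X_pow_card_pow_sub_X).1 hPn
    rw [Nat.card_zmod] at h4
    refine h3.of_dvd ?_ (Polynomial.map_dvd _ h4)
    rw [Polynomial.map_ne_zero_iff (algebraMap (ZMod 2) K).injective]
    exact FiniteField.X_pow_card_pow_sub_X_ne_zero _ (by omega) (by norm_num)
  have h5 := card_rootSet_eq_natDegree (K := K) hsep hsplit
  rw [← h5, ← Set.toFinset_card]
  congr 1
  ext a
  have h_int : IsIntegral (ZMod 2) a := Algebra.IsIntegral.isIntegral a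
  simp only [Finset.mem_filter, Finset.mem_univ, true_and, Set.mem_toFinset]
  rw [mem_rootSet]
  constructor
  · rintro rfl; exact ⟨hPm.ne_zero, minpoly.aeval _ _⟩
  · rintro ⟨-, h6⟩
    exact (minpoly.eq_of_irreducible_of_monic hPi h6 hPm).symm
end B


noncomputable def psum (n : ℕ) (p : ℂ[X]) : ℂ := (p.roots.map (· ^ n)).sum

theorem psum_mul (n : ℕ) (p q : ℂ[X]) (hp : p ≠ 0) (hq : q ≠ 0) :
    psum n (p * q) = psum n p + psum n q := by
  rw [psum, roots_mul (mul_ne_zero hp hq), Multiset.map_add, Multiset.sum_add]; rfl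

theorem psum_neg (n : ℕ) (hn : Odd n) (p : ℂ[X]) :
    psum n (p.comp (-X)) = - psum n p := by
  rw [psum, roots_comp_neg_X, Multiset.map_map, psum, ← Multiset.sum_map_neg']
  congr 1
  rw [Multiset.map_map]
  apply Multiset.map_congr rfl
  intro x _
  simp [hn.neg_pow]

theorem psum_even (n : ℕ) (hn : Odd n) (p : ℂ[X]) (h : p.comp (-X) = p) :
    psum n p = 0 := by
  have := psum_neg n hn p
  rw [h] at this
  linear_combination (1 / 2) * this

noncomputable def cub (a b c : ℂ) : ℂ[X] := X ^ 3 + C a * X ^ 2 + C b * X + C c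

theorem cub_monic (a b c : ℂ) : (cub a b c).Monic := by
  unfold cub; monicity!

theorem cub_roots (a b c : ℂ) : ∃ x y z : ℂ, (cub a b c).roots = {x, y, z} ∧
    a = -(x + y + z) ∧ b = x * y + x * z + y * z ∧ c = -(x * y * z) := by
  have hs := IsAlgClosed.splits (cub a b c)
  have hd : (cub a b c).natDegree = 3 := by unfold cub; compute_degree!
  have hc : (cub a b c).roots.card = 3 := by rw [← hd]; exact hs.natDegree_eq_card_roots.symm
  obtain ⟨x, y, z, h⟩ := Multiset.card_eq_three.1 hc
  refine ⟨x, y, z, h, ?_⟩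
  have hp := hs.eq_prod_roots_of_monic (cub_monic a b c)
  rw [h] at hp
  simp only [Multiset.insert_eq_cons, Multiset.map_cons, Multiset.map_singleton,
    Multiset.prod_cons, Multiset.prod_singleton] at hp
  have hp' : cub a b c = cub (-(x + y + z)) (x * y + x * z + y * z) (-(x * y * z)) := by
    rw [hp]; unfold cub; simp only [map_neg, map_add, map_mul]; ring
  have k2 : ∀ a b c : ℂ, (cub a b c).coeff 2 = a := by
    intro a b c; simp [cub, coeff_X, coeff_C, coeff_X_pow]
  have k1 : ∀ a b c : ℂ, (cub a b c).coeff 1 = b := by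
    intro a b c; simp [cub, coeff_X, coeff_C, coeff_X_pow]
  have k0 : ∀ a b c : ℂ, (cub a b c).coeff 0 = c := by
    intro a b c; simp [cub]
  have e2 := congrArg (fun p => coeff p 2) hp'
  have e1 := congrArg (fun p => coeff p 1) hp'
  have e0 := congrArg (fun p => coeff p 0) hp'
  simp only [k0, k1, k2] at e0 e1 e2
  exact ⟨e2, e1, e0⟩

theorem Lam_eq_psum {ψ : Polynomial (ZMod 2) → ℂ} (h : IsMul ψ)
    (hz : ∀ d, 4 ≤ d → cs ψ d = 0) (n : ℕ) (hn : 1 ≤ n) :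
    Lam ψ n = - psum n (cub (cs ψ 1) (cs ψ 2) (cs ψ 3)) := by
  obtain ⟨x, y, z, hr, h1, h2, h3⟩ := cub_roots (cs ψ 1) (cs ψ 2) (cs ψ 3)
  have hps : ∀ k, psum k (cub (cs ψ 1) (cs ψ 2) (cs ψ 3)) = x ^ k + y ^ k + z ^ k := by
    intro k; rw [psum, hr]; simp [add_assoc]
  have h0 : cs ψ 0 = 1 := by simp [cs, Mon, h.one]
  rw [hps]
  have n1 := newton h 1
  have n2 := newton h 2
  have n3 := newton h 3
  simp [Finset.sum_Icc_succ_top, h0] at n1 n2 n3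
  rw [h1] at n1
  have L1 : Lam ψ 1 = -(x + y + z) := by rw [← n1]
  have L2 : Lam ψ 2 = -(x ^ 2 + y ^ 2 + z ^ 2) := by
    rw [L1, h1, h2] at n2; linear_combination -n2
  have L3 : Lam ψ 3 = -(x ^ 3 + y ^ 3 + z ^ 3) := by
    rw [L1, L2, h1, h2, h3] at n3; linear_combination -n3
  have hrec : ∀ k, Lam ψ (k + 4) + Lam ψ (k + 3) * cs ψ 1 + Lam ψ (k + 2) * cs ψ 2
      + Lam ψ (k + 1) * cs ψ 3 = 0 := by
    intro k
    have hk := newton h (k + 4)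
    rw [hz (k + 4) (by omega), mul_zero, Finset.sum_Icc_succ_top (by omega),
      Finset.sum_Icc_succ_top (by omega), Finset.sum_Icc_succ_top (by omega),
      Finset.sum_Icc_succ_top (by omega)] at hk
    rw [Finset.sum_eq_zero] at hk
    · have e0 : k + 4 - (k + 3 + 1) = 0 := by omega
      have e1 : k + 4 - (k + 2 + 1) = 1 := by omega
      have e2 : k + 4 - (k + 1 + 1) = 2 := by omega
      have e3 : k + 4 - (k + 1) = 3 := by omega
      rw [e0, e1, e2, e3, h0] at hk
      linear_combination -hk
    · intro j hj
      rw [Finset.mem_Icc] at hj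
      rw [hz _ (by omega), mul_zero]
  have key : ∀ k, Lam ψ (k + 1) = -(x ^ (k + 1) + y ^ (k + 1) + z ^ (k + 1)) ∧
      Lam ψ (k + 2) = -(x ^ (k + 2) + y ^ (k + 2) + z ^ (k + 2)) ∧
      Lam ψ (k + 3) = -(x ^ (k + 3) + y ^ (k + 3) + z ^ (k + 3)) := by
    intro k
    induction k with
    | zero => exact ⟨by rw [L1]; ring, L2, L3⟩
    | succ k ih =>
      obtain ⟨i1, i2, i3⟩ := ih
      refine ⟨i2, i3, ?_⟩
      have := hrec k
      rw [i1, i2, i3, h1, h2, h3] at this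
      show Lam ψ (k + 4) = _
      linear_combination this
  obtain ⟨k, rfl⟩ := Nat.exists_eq_add_of_le' hn
  exact (key k).1

def lgN (a b c d : ZMod 2) : ℕ := a.val + 2 * b.val + 4 * (d + a * c + a * b).val
def sgN (a b c : ZMod 2) : ℕ := (c + a * b).val

theorem lgN_mul : ∀ a b c d a' b' c' d' : ZMod 2,
    lgN (a + a') (b + a * a' + b') (c + b * a' + a * b' + c')
      (d + c * a' + b * b' + a * c' + d') % 8 = (lgN a b c d + lgN a' b' c' d') % 8 := by
  decide

theorem sgN_mul : ∀ a b c a' b' c' : ZMod 2,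
    sgN (a + a') (b + a * a' + b') (c + b * a' + a * b' + c') % 2
       = (sgN a b c + sgN a' b' c') % 2 := by
  decide

theorem pow_congr_mod {x : ℂ} {N : ℕ} (hx : x ^ N = 1) {a b : ℕ} (h : a % N = b % N) :
    x ^ a = x ^ b := by
  rw [← Nat.div_add_mod a N, ← Nat.div_add_mod b N, h, pow_add, pow_add, pow_mul, pow_mul, hx,
    one_pow, one_pow]

/-- value depending on the four leading coefficients -/
noncomputable def Hf (m : ℕ) (θ ε : ℂ) (a b c d : ZMod 2) : ℂ :=
  θ ^ (m * lgN a b c d) * ε ^ sgN a b c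

noncomputable def tf (H : ZMod 2 → ZMod 2 → ZMod 2 → ZMod 2 → ℂ) (f : Polynomial (ZMod 2)) : ℂ :=
  H (f.reverse.coeff 1) (f.reverse.coeff 2) (f.reverse.coeff 3) (f.reverse.coeff 4)

noncomputable def psi (m : ℕ) (θ ε : ℂ) (f : Polynomial (ZMod 2)) : ℂ :=
  θ ^ f.natDegree * tf (Hf m θ ε) f

theorem Hf_mul (m : ℕ) (θ ε : ℂ) (hθ : θ ^ 8 = 1) (hε : ε ^ 2 = 1)
    (a b c d a' b' c' d' : ZMod 2) :
    Hf m θ ε (a + a') (b + a * a' + b') (c + b * a' + a * b' + c')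
      (d + c * a' + b * b' + a * c' + d') = Hf m θ ε a b c d * Hf m θ ε a' b' c' d' := by
  unfold Hf
  have h1 := pow_congr_mod hθ (show (m * lgN (a + a') (b + a * a' + b')
    (c + b * a' + a * b' + c') (d + c * a' + b * b' + a * c' + d')) % 8 =
    (m * (lgN a b c d + lgN a' b' c' d')) % 8 by
      rw [Nat.mul_mod, lgN_mul, ← Nat.mul_mod])
  have h2 := pow_congr_mod hε (sgN_mul a b c a' b' c')
  rw [h1, h2]; ring

theorem psi_isMul (m : ℕ) (θ ε : ℂ) (hθ : θ ^ 8 = 1) (hε : ε ^ 2 = 1) : IsMul (psi m θ ε) := by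
  constructor
  · have : (1 : Polynomial (ZMod 2)).reverse = 1 := by
      rw [← C_1, reverse_C]
    simp [psi, tf, this, coeff_one, Hf, lgN, sgN]
  · intro f g hf hg
    have h0 : f.reverse.coeff 0 = 1 := by rw [coeff_zero_reverse]; exact hf
    have h0' : g.reverse.coeff 0 = 1 := by rw [coeff_zero_reverse]; exact hg
    have key := Hf_mul m θ ε hθ hε (f.reverse.coeff 1) (f.reverse.coeff 2) (f.reverse.coeff 3)
      (f.reverse.coeff 4) (g.reverse.coeff 1) (g.reverse.coeff 2) (g.reverse.coeff 3)
      (g.reverse.coeff 4)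
    have e1 : (f * g).reverse.coeff 1 = f.reverse.coeff 1 + g.reverse.coeff 1 := by
      rw [reverse_mul_of_domain, coeff_mul]
      simp [Finset.Nat.antidiagonal_succ, h0, h0']; ring
    have e2 : (f * g).reverse.coeff 2 = f.reverse.coeff 2 + f.reverse.coeff 1 * g.reverse.coeff 1
        + g.reverse.coeff 2 := by
      rw [reverse_mul_of_domain, coeff_mul]
      simp [Finset.Nat.antidiagonal_succ, h0, h0']; ring
    have e3 : (f * g).reverse.coeff 3 = f.reverse.coeff 3 + f.reverse.coeff 2 * g.reverse.coeff 1
        + f.reverse.coeff 1 * g.reverse.coeff 2 + g.reverse.coeff 3 := by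
      rw [reverse_mul_of_domain, coeff_mul]
      simp [Finset.Nat.antidiagonal_succ, h0, h0']; ring
    have e4 : (f * g).reverse.coeff 4 = f.reverse.coeff 4 + f.reverse.coeff 3 * g.reverse.coeff 1
        + f.reverse.coeff 2 * g.reverse.coeff 2 + f.reverse.coeff 1 * g.reverse.coeff 3
        + g.reverse.coeff 4 := by
      rw [reverse_mul_of_domain, coeff_mul]
      simp [Finset.Nat.antidiagonal_succ, h0, h0']; ring
    unfold psi tf
    rw [e1, e2, e3, e4, key, hf.natDegree_mul hg]
    ring

theorem tf_sum_zero (H : ZMod 2 → ZMod 2 → ZMod 2 → ZMod 2 → ℂ) :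
    ∑ f ∈ Mon 0, tf H f = H 0 0 0 0 := by
  have : (1 : Polynomial (ZMod 2)).reverse = 1 := by
    rw [← C_1, reverse_C]
  simp [Mon, tf, this, coeff_one, -coeff_one_reverse]

theorem tf_sum_succ (d : ℕ) (H : ZMod 2 → ZMod 2 → ZMod 2 → ZMod 2 → ℂ) :
    ∑ f ∈ Mon (d + 1), tf H f = ∑ f ∈ Mon d, tf (fun a b c e => H a b c e +
      H (a + if d = 0 then 1 else 0) (b + if d = 1 then 1 else 0) (c + if d = 2 then 1 else 0)
        (e + if d = 3 then 1 else 0)) f := by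
  rw [sum_mon_succ]
  apply Finset.sum_congr rfl
  intro g hg
  obtain ⟨hm, hd⟩ := (mem_mon _ _).1 hg
  have h1 : (X * g + 1).reverse = g.reverse + X ^ (d + 1) := by
    rw [← C_1, reverse_add_C, natDegree_X_mul hm.ne_zero, hd, reverse_X_mul, C_1, one_mul]
  have h2 : ∀ i, (X * g + 1).reverse.coeff (i + 1) =
      g.reverse.coeff (i + 1) + if d = i then 1 else 0 := by
    intro i
    rw [h1, coeff_add, coeff_X_pow]
    congr 1
    simp [eq_comm]
  unfold tf
  rw [h2 0, h2 1, h2 2, h2 3, reverse_X_mul]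

theorem cs_psi (m : ℕ) (θ ε : ℂ) (d : ℕ) :
    cs (psi m θ ε) d = θ ^ d * ∑ f ∈ Mon d, tf (Hf m θ ε) f := by
  rw [cs, Finset.mul_sum]
  apply Finset.sum_congr rfl
  intro f hf
  rw [psi, ((mem_mon _ _).1 hf).2]

theorem cs_one (m : ℕ) (θ ε : ℂ) : cs (psi m θ ε) 1 = θ * (1 + θ ^ m) := by
  rw [cs_psi, tf_sum_succ, tf_sum_zero]
  simp [Hf, lgN, sgN, ZMod.val_one]

theorem cs_two (m : ℕ) (θ ε : ℂ) :
    cs (psi m θ ε) 2 = θ ^ 2 * (1 + θ ^ m + θ ^ (2 * m) + θ ^ (7 * m) * ε) := by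
  rw [cs_psi, tf_sum_succ, tf_sum_succ, tf_sum_zero]
  have hh : (1 + 1 : ZMod 2) = 0 := by decide
  simp [Hf, lgN, sgN, ZMod.val_one, hh]
  left; ring

theorem cs_three (m : ℕ) (θ ε : ℂ) :
    cs (psi m θ ε) 3 = θ ^ 3 * (1 + ε + θ ^ (2 * m) * (1 + ε) + θ ^ m + θ ^ (5 * m) * ε
      + θ ^ (7 * m) * ε + θ ^ (3 * m)) := by
  rw [cs_psi, tf_sum_succ, tf_sum_succ, tf_sum_succ, tf_sum_zero]
  have hh : (1 + 1 : ZMod 2) = 0 := by decide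
  simp [Hf, lgN, sgN, ZMod.val_one, hh]
  left; ring

theorem tf_four (m : ℕ) (θ ε : ℂ) : ∑ f ∈ Mon 4, tf (Hf m θ ε) f =
      (1 + ε) * ((1 + θ ^ m) * (1 + θ ^ (2 * m)) * (1 + θ ^ (4 * m))) := by
  rw [tf_sum_succ, tf_sum_succ, tf_sum_succ, tf_sum_succ, tf_sum_zero]
  have hh : (1 + 1 : ZMod 2) = 0 := by decide
  simp [Hf, lgN, sgN, ZMod.val_one, hh]
  ring

theorem cs_zero (m : ℕ) (θ ε : ℂ)
    (h : (1 + ε) * ((1 + θ ^ m) * (1 + θ ^ (2 * m)) * (1 + θ ^ (4 * m))) = 0) (d : ℕ)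
    (hd : 4 ≤ d) : cs (psi m θ ε) d = 0 := by
  rw [cs_psi]
  have : ∑ f ∈ Mon d, tf (Hf m θ ε) f = 0 := by
    induction d, hd using Nat.le_induction with
    | base => rw [tf_four, h]
    | succ d hd ih =>
      rw [tf_sum_succ]
      have h0 : d ≠ 0 := by omega
      have h1 : d ≠ 1 := by omega
      have h2 : d ≠ 2 := by omega
      have h3 : d ≠ 3 := by omega
      simp only [h0, h1, h2, h3, if_false, add_zero]
      have : ∀ f ∈ Mon d, tf (fun a b c e => Hf m θ ε a b c e + Hf m θ ε a b c e) f
        = 2 * tf (Hf m θ ε) f := by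
        intro f _; unfold tf; ring
      rw [Finset.sum_congr rfl this, ← Finset.mul_sum, ih, mul_zero]
  rw [this, mul_zero]


/-- The (reversed) L-polynomial of the character. -/
noncomputable def lf (m : ℕ) (ε θ : ℂ) : ℂ[X] :=
  cub (θ * (1 + θ ^ m)) (θ ^ 2 * (1 + θ ^ m + θ ^ (2 * m) + θ ^ (7 * m) * ε))
    (θ ^ 3 * (1 + ε + θ ^ (2 * m) * (1 + ε) + θ ^ m + θ ^ (5 * m) * ε
      + θ ^ (7 * m) * ε + θ ^ (3 * m)))

theorem lf_ne (m : ℕ) (ε θ : ℂ) : lf m ε θ ≠ 0 := (cub_monic _ _ _).ne_zero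

noncomputable def P21 : ℂ[X] := X ^ 2 + 2 * X + 2
noncomputable def P41 : ℂ[X] := X ^ 4 + 2 * X ^ 3 + 2 * X ^ 2 + 4 * X + 4
noncomputable def P81 : ℂ[X] :=
  X ^ 8 + 4 * X ^ 7 + 6 * X ^ 6 + 4 * X ^ 5 + 2 * X ^ 4 + 8 * X ^ 3 + 24 * X ^ 2 + 32 * X + 16
noncomputable def P82 : ℂ[X] :=
  X ^ 8 + 2 * X ^ 6 + 4 * X ^ 5 + 2 * X ^ 4 + 8 * X ^ 3 + 8 * X ^ 2 + 16

theorem ne_of_eval_zero (p : ℂ[X]) (h : p.eval 0 ≠ 0) : p ≠ 0 := by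
  rintro rfl; simp at h

theorem ne21 : P21 ≠ 0 := ne_of_eval_zero _ (by simp [P21])
theorem ne41 : P41 ≠ 0 := ne_of_eval_zero _ (by simp [P41])
theorem ne81 : P81 ≠ 0 := ne_of_eval_zero _ (by simp [P81])
theorem ne82 : P82 ≠ 0 := ne_of_eval_zero _ (by simp [P82])
theorem nep : (X ^ 2 + 2 : ℂ[X]) ≠ 0 := ne_of_eval_zero _ (by simp)
theorem nem : (X ^ 2 - 2 : ℂ[X]) ≠ 0 := ne_of_eval_zero _ (by simp)

theorem psum_p (n : ℕ) (hn : Odd n) : psum n (X ^ 2 + 2) = 0 :=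
  psum_even n hn _ (by simp)
theorem psum_m (n : ℕ) (hn : Odd n) : psum n (X ^ 2 - 2) = 0 :=
  psum_even n hn _ (by simp)
theorem psum_X (n : ℕ) (hn : Odd n) : psum n X = 0 := by
  simp [psum, hn.pos.ne']

theorem quad (n : ℕ) (F : ℂ → ℂ[X]) (hF : ∀ θ, F θ ≠ 0) (A B : ℂ[X])
    (hp : ∀ θ, θ ^ 4 = -1 → F θ * F (-θ) = A + C θ ^ 2 * B) (η : ℂ) (hη : η ^ 4 = -1) :
    psum n (F η) + psum n (F (-η)) + psum n (F (η ^ 3)) + psum n (F (-η ^ 3)) =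
      psum n (A * A + B * B) := by
  have h3 : (η ^ 3) ^ 4 = -1 := by
    have : (η ^ 3) ^ 4 = (η ^ 4) ^ 3 := by ring
    rw [this, hη]; norm_num
  have e : A * A + B * B = (F η * F (-η)) * (F (η ^ 3) * F (-η ^ 3)) := by
    rw [hp η hη, hp (η ^ 3) h3]
    have hh : (C η : ℂ[X]) ^ 4 = -1 := by rw [← C_pow, hη]; simp
    rw [C_pow]
    linear_combination (-C η ^ 2 * A * B - (C η ^ 4 - 1) * B * B) * hh
  rw [e, psum_mul _ _ _ (mul_ne_zero (hF _) (hF _)) (mul_ne_zero (hF _) (hF _)),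
    psum_mul _ _ _ (hF _) (hF _), psum_mul _ _ _ (hF _) (hF _)]
  ring

theorem red_7p (θ : ℂ) (hθ : θ ^ 4 = -1) :
    lf 7 1 θ = cub (θ + 1) (θ ^ 3 + θ ^ 2 + θ + 1) (2 * θ ^ 3 + 2 * θ) := by
  unfold lf
  congr 1
  · linear_combination (θ ^ 4 - 1) * hθ
  · linear_combination (θ ^ 47 - θ ^ 43 + θ ^ 39 - θ ^ 35 + θ ^ 31 - θ ^ 27 + θ ^ 23 - θ ^ 19 + θ ^ 15 + θ ^ 12 - θ ^ 11 - θ ^ 8 + θ ^ 7 + θ ^ 5 + θ ^ 4 - θ ^ 3 - θ - 1) * hθ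
  · linear_combination (θ ^ 48 - θ ^ 44 + θ ^ 40 - θ ^ 36 + θ ^ 34 + θ ^ 32 - θ ^ 30 - θ ^ 28 + θ ^ 26 + θ ^ 24 - θ ^ 22 + θ ^ 18 - θ ^ 14 + 2 * θ ^ 13 + θ ^ 10 - 2 * θ ^ 9 + 2 * θ ^ 5 - 2 * θ) * hθ

theorem pair_7p (θ : ℂ) (hθ : θ ^ 4 = -1) :
    lf 7 1 θ * lf 7 1 (-θ) =
      (X ^ 6 + 2 * X ^ 5 + 3 * X ^ 4 + 4 * X ^ 3 + 6 * X ^ 2 + 8 * X + 8) + C θ ^ 2 * (X ^ 4 - 2 * X ^ 2) := by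
  have hθ' : (-θ) ^ 4 = -1 := by rw [← hθ]; ring
  rw [red_7p θ hθ, red_7p (-θ) hθ']
  have hh : (C θ : ℂ[X]) ^ 4 = -1 := by rw [← C_pow, hθ]; simp
  simp only [cub, map_add, map_sub, map_mul, map_neg, map_pow, map_one, map_ofNat, map_zero]
  linear_combination (-2 * X ^ 3 - C θ ^ 2 * X ^ 2 - 5 * X ^ 2 - 4 * C θ ^ 2 * X - 8 * X - 4 * C θ ^ 2 - 8) * hh

theorem red_7n (θ : ℂ) (hθ : θ ^ 4 = -1) :
    lf 7 (-1) θ = cub (θ + 1) (-θ ^ 3 + θ ^ 2 + θ + 1) (2 * θ ^ 2 + 2) := by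
  unfold lf
  congr 1
  · linear_combination (θ ^ 4 - 1) * hθ
  · linear_combination (-θ ^ 47 + θ ^ 43 - θ ^ 39 + θ ^ 35 - θ ^ 31 + θ ^ 27 - θ ^ 23 + θ ^ 19 - θ ^ 15 + θ ^ 12 + θ ^ 11 - θ ^ 8 - θ ^ 7 + θ ^ 5 + θ ^ 4 + θ ^ 3 - θ - 1) * hθ
  · linear_combination (-θ ^ 48 + θ ^ 44 - θ ^ 40 + θ ^ 36 - θ ^ 34 - θ ^ 32 + θ ^ 30 + θ ^ 28 - θ ^ 26 - θ ^ 24 + θ ^ 22 + 2 * θ ^ 20 - θ ^ 18 - 2 * θ ^ 16 + θ ^ 14 + 2 * θ ^ 12 - θ ^ 10 - 2 * θ ^ 8 + 2 * θ ^ 6 + 2 * θ ^ 4 - 2 * θ ^ 2 - 2) * hθ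

theorem pair_7n (θ : ℂ) (hθ : θ ^ 4 = -1) :
    lf 7 (-1) θ * lf 7 (-1) (-θ) =
      (X ^ 6 + 2 * X ^ 5 + 3 * X ^ 4 + 4 * X ^ 3 + 2 * X ^ 2) + C θ ^ 2 * (X ^ 4 + 4 * X ^ 3 + 6 * X ^ 2 + 8 * X + 8) := by
  have hθ' : (-θ) ^ 4 = -1 := by rw [← hθ]; ring
  rw [red_7n θ hθ, red_7n (-θ) hθ']
  have hh : (C θ : ℂ[X]) ^ 4 = -1 := by rw [← C_pow, hθ]; simp
  simp only [cub, map_add, map_sub, map_mul, map_neg, map_pow, map_one, map_ofNat, map_zero]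
  linear_combination (2 * X ^ 3 - C θ ^ 2 * X ^ 2 + 3 * X ^ 2 + 4 * X + 4) * hh

theorem red_5p (θ : ℂ) (hθ : θ ^ 4 = -1) :
    lf 5 1 θ = cub (-θ ^ 2 + θ) (-θ ^ 3 + θ ^ 2 - θ - 1) (2 * θ ^ 3 - 2 * θ) := by
  unfold lf
  congr 1
  · linear_combination (θ ^ 2) * hθ
  · linear_combination (θ ^ 33 - θ ^ 29 + θ ^ 25 - θ ^ 21 + θ ^ 17 - θ ^ 13 + θ ^ 9 + θ ^ 8 - θ ^ 5 - θ ^ 4 + θ ^ 3 + θ + 1) * hθ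
  · linear_combination (θ ^ 34 - θ ^ 30 + θ ^ 26 + θ ^ 24 - θ ^ 22 - θ ^ 20 + θ ^ 18 + θ ^ 16 - θ ^ 12 + 2 * θ ^ 9 + θ ^ 8 - 2 * θ ^ 5 + 2 * θ) * hθ

theorem pair_5p (θ : ℂ) (hθ : θ ^ 4 = -1) :
    lf 5 1 θ * lf 5 1 (-θ) =
      (X ^ 6 - 3 * X ^ 4 + 6 * X ^ 2 - 8) + C θ ^ 2 * (-2 * X ^ 5 + X ^ 4 + 4 * X ^ 3 + 2 * X ^ 2 - 8 * X) := by
  have hθ' : (-θ) ^ 4 = -1 := by rw [← hθ]; ring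
  rw [red_5p θ hθ, red_5p (-θ) hθ']
  have hh : (C θ : ℂ[X]) ^ 4 = -1 := by rw [← C_pow, hθ]; simp
  simp only [cub, map_add, map_sub, map_mul, map_neg, map_pow, map_one, map_ofNat, map_zero]
  linear_combination (X ^ 4 - C θ ^ 2 * X ^ 2 - 5 * X ^ 2 + 4 * C θ ^ 2 * X - 4 * C θ ^ 2 + 8) * hh

theorem red_5n (θ : ℂ) (hθ : θ ^ 4 = -1) :
    lf 5 (-1) θ = cub (-θ ^ 2 + θ) (-θ ^ 3 + θ ^ 2 + θ - 1) (2 * θ ^ 2 + 2) := by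
  unfold lf
  congr 1
  · linear_combination (θ ^ 2) * hθ
  · linear_combination (-θ ^ 33 + θ ^ 29 - θ ^ 25 + θ ^ 21 - θ ^ 17 + θ ^ 13 - θ ^ 9 + θ ^ 8 + θ ^ 5 - θ ^ 4 + θ ^ 3 - θ + 1) * hθ
  · linear_combination (-θ ^ 34 + θ ^ 30 - θ ^ 26 - θ ^ 24 + θ ^ 22 + θ ^ 20 - θ ^ 18 - θ ^ 16 + 2 * θ ^ 14 + θ ^ 12 - 2 * θ ^ 10 - θ ^ 8 + 2 * θ ^ 6 + 2 * θ ^ 4 - 2 * θ ^ 2 - 2) * hθ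

theorem pair_5n (θ : ℂ) (hθ : θ ^ 4 = -1) :
    lf 5 (-1) θ * lf 5 (-1) (-θ) =
      (X ^ 6 - 3 * X ^ 4 + 4 * X ^ 3 + 2 * X ^ 2 - 8 * X) + C θ ^ 2 * (-2 * X ^ 5 + X ^ 4 + 4 * X ^ 3 - 6 * X ^ 2 + 8) := by
  have hθ' : (-θ) ^ 4 = -1 := by rw [← hθ]; ring
  rw [red_5n θ hθ, red_5n (-θ) hθ']
  have hh : (C θ : ℂ[X]) ^ 4 = -1 := by rw [← C_pow, hθ]; simp
  simp only [cub, map_add, map_sub, map_mul, map_neg, map_pow, map_one, map_ofNat, map_zero]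
  linear_combination (X ^ 4 - C θ ^ 2 * X ^ 2 - X ^ 2 + 4 * X + 4) * hh

theorem red_3p (θ : ℂ) (hθ : θ ^ 4 = -1) :
    lf 3 1 θ = cub (θ - 1) (-θ ^ 3 + θ ^ 2 - θ + 1) (2 * θ ^ 3 + 2 * θ) := by
  unfold lf
  congr 1
  · linear_combination (1) * hθ
  · linear_combination (θ ^ 19 - θ ^ 15 + θ ^ 11 - θ ^ 7 + θ ^ 4 + θ ^ 3 + θ - 1) * hθ
  · linear_combination (θ ^ 20 - θ ^ 16 + θ ^ 14 + θ ^ 12 - θ ^ 10 + θ ^ 6 + 2 * θ ^ 5 - 2 * θ) * hθ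

theorem pair_3p (θ : ℂ) (hθ : θ ^ 4 = -1) :
    lf 3 1 θ * lf 3 1 (-θ) =
      (X ^ 6 - 2 * X ^ 5 + 3 * X ^ 4 - 4 * X ^ 3 + 6 * X ^ 2 - 8 * X + 8) + C θ ^ 2 * (X ^ 4 - 2 * X ^ 2) := by
  have hθ' : (-θ) ^ 4 = -1 := by rw [← hθ]; ring
  rw [red_3p θ hθ, red_3p (-θ) hθ']
  have hh : (C θ : ℂ[X]) ^ 4 = -1 := by rw [← C_pow, hθ]; simp
  simp only [cub, map_add, map_sub, map_mul, map_neg, map_pow, map_one, map_ofNat, map_zero]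
  linear_combination (2 * X ^ 3 - C θ ^ 2 * X ^ 2 - 5 * X ^ 2 + 4 * C θ ^ 2 * X + 8 * X - 4 * C θ ^ 2 - 8) * hh

theorem red_3n (θ : ℂ) (hθ : θ ^ 4 = -1) :
    lf 3 (-1) θ = cub (θ - 1) (θ ^ 3 + θ ^ 2 - θ + 1) (-2 * θ ^ 2 - 2) := by
  unfold lf
  congr 1
  · linear_combination (1) * hθ
  · linear_combination (-θ ^ 19 + θ ^ 15 - θ ^ 11 + θ ^ 7 + θ ^ 4 - θ ^ 3 + θ - 1) * hθ
  · linear_combination (-θ ^ 20 + θ ^ 16 - θ ^ 14 - θ ^ 12 + θ ^ 10 + 2 * θ ^ 8 - θ ^ 6 - 2 * θ ^ 4 + 2 * θ ^ 2 + 2) * hθ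

theorem pair_3n (θ : ℂ) (hθ : θ ^ 4 = -1) :
    lf 3 (-1) θ * lf 3 (-1) (-θ) =
      (X ^ 6 - 2 * X ^ 5 + 3 * X ^ 4 - 4 * X ^ 3 + 2 * X ^ 2) + C θ ^ 2 * (X ^ 4 - 4 * X ^ 3 + 6 * X ^ 2 - 8 * X + 8) := by
  have hθ' : (-θ) ^ 4 = -1 := by rw [← hθ]; ring
  rw [red_3n θ hθ, red_3n (-θ) hθ']
  have hh : (C θ : ℂ[X]) ^ 4 = -1 := by rw [← C_pow, hθ]; simp
  simp only [cub, map_add, map_sub, map_mul, map_neg, map_pow, map_one, map_ofNat, map_zero]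
  linear_combination (-2 * X ^ 3 - C θ ^ 2 * X ^ 2 + 3 * X ^ 2 - 4 * X + 4) * hh

theorem red_1p (θ : ℂ) (hθ : θ ^ 4 = -1) :
    lf 1 1 θ = cub (θ ^ 2 + θ) (θ ^ 3 + θ ^ 2 + θ - 1) (2 * θ ^ 3 - 2 * θ) := by
  unfold lf
  congr 1
  · linear_combination (0) * hθ
  · linear_combination (θ ^ 5 - θ + 1) * hθ
  · linear_combination (θ ^ 6 + θ ^ 4 + 2 * θ) * hθ

theorem pair_1p (θ : ℂ) (hθ : θ ^ 4 = -1) :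
    lf 1 1 θ * lf 1 1 (-θ) =
      (X ^ 6 - 3 * X ^ 4 + 6 * X ^ 2 - 8) + C θ ^ 2 * (2 * X ^ 5 + X ^ 4 - 4 * X ^ 3 + 2 * X ^ 2 + 8 * X) := by
  have hθ' : (-θ) ^ 4 = -1 := by rw [← hθ]; ring
  rw [red_1p θ hθ, red_1p (-θ) hθ']
  have hh : (C θ : ℂ[X]) ^ 4 = -1 := by rw [← C_pow, hθ]; simp
  simp only [cub, map_add, map_sub, map_mul, map_neg, map_pow, map_one, map_ofNat, map_zero]
  linear_combination (X ^ 4 - C θ ^ 2 * X ^ 2 - 5 * X ^ 2 - 4 * C θ ^ 2 * X - 4 * C θ ^ 2 + 8) * hh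

theorem red_1n (θ : ℂ) (hθ : θ ^ 4 = -1) :
    lf 1 (-1) θ = cub (θ ^ 2 + θ) (θ ^ 3 + θ ^ 2 - θ - 1) (-2 * θ ^ 2 - 2) := by
  unfold lf
  congr 1
  · linear_combination (0) * hθ
  · linear_combination (-θ ^ 5 + θ + 1) * hθ
  · linear_combination (-θ ^ 6 - θ ^ 4 + 2 * θ ^ 2 + 2) * hθ

theorem pair_1n (θ : ℂ) (hθ : θ ^ 4 = -1) :
    lf 1 (-1) θ * lf 1 (-1) (-θ) =
      (X ^ 6 - 3 * X ^ 4 - 4 * X ^ 3 + 2 * X ^ 2 + 8 * X) + C θ ^ 2 * (2 * X ^ 5 + X ^ 4 - 4 * X ^ 3 - 6 * X ^ 2 + 8) := by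
  have hθ' : (-θ) ^ 4 = -1 := by rw [← hθ]; ring
  rw [red_1n θ hθ, red_1n (-θ) hθ']
  have hh : (C θ : ℂ[X]) ^ 4 = -1 := by rw [← C_pow, hθ]; simp
  simp only [cub, map_add, map_sub, map_mul, map_neg, map_pow, map_one, map_ofNat, map_zero]
  linear_combination (X ^ 4 - C θ ^ 2 * X ^ 2 - X ^ 2 - 4 * X + 4) * hh

theorem quad_7p (n : ℕ) (hn : Odd n) (η : ℂ) (hη : η ^ 4 = -1) :
    psum n (lf 7 1 η) + psum n (lf 7 1 (-η)) + psum n (lf 7 1 (η ^ 3))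
      + psum n (lf 7 1 (-η ^ 3)) = 2 * psum n P21 + psum n P82 := by
  rw [quad n _ (lf_ne 7 1) _ _ pair_7p η hη]
  have e : ∀ G : ℂ[X], G = P21 * P21 * P82 → psum n G = 2 * psum n P21 + psum n P82 := by
    rintro _ rfl
    simp only [psum_mul, ne21, ne81, ne82, nep, nem, ne_eq, mul_eq_zero, comp_neg_X_eq_zero_iff,
      or_self, not_false_eq_true, psum_neg n hn, psum_p n hn, psum_m n hn]
    ring
  apply e
  simp only [P21, P81, P82, add_comp, mul_comp, pow_comp, X_comp, ofNat_comp]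
  ring

theorem dbl_7p (n : ℕ) (hn : Odd n) (θ : ℂ) (hθ : θ ^ 2 = -1) :
    psum n (lf 7 1 θ) + psum n (lf 7 1 (-θ)) = psum n P21 := by
  have red : ∀ θ : ℂ, θ ^ 2 = -1 → lf 7 1 θ =
      cub (θ + 1) (0) (0) := by
    intro θ hθ
    unfold lf
    congr 1
    · linear_combination (θ ^ 6 - θ ^ 4 + θ ^ 2 - 1) * hθ
    · linear_combination (θ ^ 49 - θ ^ 47 + θ ^ 45 - θ ^ 43 + θ ^ 41 - θ ^ 39 + θ ^ 37 - θ ^ 35 + θ ^ 33 - θ ^ 31 + θ ^ 29 - θ ^ 27 + θ ^ 25 - θ ^ 23 + θ ^ 21 - θ ^ 19 + θ ^ 17 - θ ^ 15 + θ ^ 14 + θ ^ 13 - θ ^ 12 - θ ^ 11 + θ ^ 10 + θ ^ 9 - θ ^ 8 + θ ^ 6 - θ ^ 4 + θ ^ 2) * hθ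
    · linear_combination (θ ^ 50 - θ ^ 48 + θ ^ 46 - θ ^ 44 + θ ^ 42 - θ ^ 40 + θ ^ 38 + θ ^ 22 - θ ^ 20 + θ ^ 18 - θ ^ 16 + 2 * θ ^ 15 + θ ^ 14 - 2 * θ ^ 13 - θ ^ 12 + 2 * θ ^ 11 + θ ^ 10 - 2 * θ ^ 9 + 2 * θ ^ 7 - 2 * θ ^ 5 + 2 * θ ^ 3) * hθ
  rw [← psum_mul n _ _ (lf_ne _ _ _) (lf_ne _ _ _), red θ hθ, red (-θ) (by rw [← hθ]; ring)]
  have hh : (C θ : ℂ[X]) ^ 2 = -1 := by rw [← C_pow, hθ]; simp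
  have e : ∀ G : ℂ[X], G = X * X * (X * X) * P21 → psum n G = psum n P21 := by
    rintro _ rfl
    simp only [psum_mul, ne21, ne41, X_ne_zero, ne_eq, mul_eq_zero, comp_neg_X_eq_zero_iff,
      or_self, not_false_eq_true, psum_neg n hn, psum_X n hn]
    ring
  apply e
  simp only [P21, P41, add_comp, mul_comp, pow_comp, X_comp, ofNat_comp]
  simp only [cub, map_add, map_sub, map_mul, map_neg, map_pow, map_one, map_ofNat, map_zero]
  linear_combination (-X ^ 4) * hh

theorem quad_7n (n : ℕ) (hn : Odd n) (η : ℂ) (hη : η ^ 4 = -1) :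
    psum n (lf 7 (-1) η) + psum n (lf 7 (-1) (-η)) + psum n (lf 7 (-1) (η ^ 3))
      + psum n (lf 7 (-1) (-η ^ 3)) = psum n P81 := by
  rw [quad n _ (lf_ne 7 (-1)) _ _ pair_7n η hη]
  have e : ∀ G : ℂ[X], G = P81 * ((X ^ 2 + 2) * (X ^ 2 + 2)) → psum n G = psum n P81 := by
    rintro _ rfl
    simp only [psum_mul, ne21, ne81, ne82, nep, nem, ne_eq, mul_eq_zero, comp_neg_X_eq_zero_iff,
      or_self, not_false_eq_true, psum_neg n hn, psum_p n hn, psum_m n hn]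
    ring
  apply e
  simp only [P21, P81, P82, add_comp, mul_comp, pow_comp, X_comp, ofNat_comp]
  ring

theorem dbl_7n (n : ℕ) (hn : Odd n) (θ : ℂ) (hθ : θ ^ 2 = -1) :
    psum n (lf 7 (-1) θ) + psum n (lf 7 (-1) (-θ)) = psum n P41 := by
  have red : ∀ θ : ℂ, θ ^ 2 = -1 → lf 7 (-1) θ =
      cub (θ + 1) (2 * θ) (0) := by
    intro θ hθ
    unfold lf
    congr 1
    · linear_combination (θ ^ 6 - θ ^ 4 + θ ^ 2 - 1) * hθ
    · linear_combination (-θ ^ 49 + θ ^ 47 - θ ^ 45 + θ ^ 43 - θ ^ 41 + θ ^ 39 - θ ^ 37 + θ ^ 35 - θ ^ 33 + θ ^ 31 - θ ^ 29 + θ ^ 27 - θ ^ 25 + θ ^ 23 - θ ^ 21 + θ ^ 19 - θ ^ 17 + θ ^ 15 + θ ^ 14 - θ ^ 13 - θ ^ 12 + θ ^ 11 + θ ^ 10 - θ ^ 9 - θ ^ 8 + 2 * θ ^ 7 + θ ^ 6 - 2 * θ ^ 5 - θ ^ 4 + 2 * θ ^ 3 + θ ^ 2 - 2 * θ) * hθ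
    · linear_combination (-θ ^ 50 + θ ^ 48 - θ ^ 46 + θ ^ 44 - θ ^ 42 + θ ^ 40 - θ ^ 38 + θ ^ 22 - θ ^ 20 + θ ^ 18 - θ ^ 16 + θ ^ 14 - θ ^ 12 + θ ^ 10) * hθ
  rw [← psum_mul n _ _ (lf_ne _ _ _) (lf_ne _ _ _), red θ hθ, red (-θ) (by rw [← hθ]; ring)]
  have hh : (C θ : ℂ[X]) ^ 2 = -1 := by rw [← C_pow, hθ]; simp
  have e : ∀ G : ℂ[X], G = X * X * P41 → psum n G = psum n P41 := by
    rintro _ rfl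
    simp only [psum_mul, ne21, ne41, X_ne_zero, ne_eq, mul_eq_zero, comp_neg_X_eq_zero_iff,
      or_self, not_false_eq_true, psum_neg n hn, psum_X n hn]
    ring
  apply e
  simp only [P21, P41, add_comp, mul_comp, pow_comp, X_comp, ofNat_comp]
  simp only [cub, map_add, map_sub, map_mul, map_neg, map_pow, map_one, map_ofNat, map_zero]
  linear_combination (-X ^ 4 - 4 * X ^ 3 - 4 * X ^ 2) * hh

theorem quad_5p (n : ℕ) (hn : Odd n) (η : ℂ) (hη : η ^ 4 = -1) :
    psum n (lf 5 1 η) + psum n (lf 5 1 (-η)) + psum n (lf 5 1 (η ^ 3))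
      + psum n (lf 5 1 (-η ^ 3)) = 2 * psum n P21 - psum n P81 := by
  rw [quad n _ (lf_ne 5 1) _ _ pair_5p η hη]
  have e : ∀ G : ℂ[X], G = P81.comp (-X) * (P21 * P21) → psum n G = 2 * psum n P21 - psum n P81 := by
    rintro _ rfl
    simp only [psum_mul, ne21, ne81, ne82, nep, nem, ne_eq, mul_eq_zero, comp_neg_X_eq_zero_iff,
      or_self, not_false_eq_true, psum_neg n hn, psum_p n hn, psum_m n hn]
    ring
  apply e
  simp only [P21, P81, P82, add_comp, mul_comp, pow_comp, X_comp, ofNat_comp]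
  ring

theorem dbl_5p (n : ℕ) (hn : Odd n) (θ : ℂ) (hθ : θ ^ 2 = -1) :
    psum n (lf 5 1 θ) + psum n (lf 5 1 (-θ)) = -psum n P21 := by
  have red : ∀ θ : ℂ, θ ^ 2 = -1 → lf 5 1 θ =
      cub (θ - 1) (0) (0) := by
    intro θ hθ
    unfold lf
    congr 1
    · linear_combination (θ ^ 4 - θ ^ 2 + 1) * hθ
    · linear_combination (θ ^ 35 - θ ^ 33 + θ ^ 31 - θ ^ 29 + θ ^ 27 - θ ^ 25 + θ ^ 23 - θ ^ 21 + θ ^ 19 - θ ^ 17 + θ ^ 15 - θ ^ 13 + θ ^ 11 + θ ^ 10 - θ ^ 9 - θ ^ 8 + θ ^ 7 + θ ^ 6 - θ ^ 4 + θ ^ 2) * hθ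
    · linear_combination (θ ^ 36 - θ ^ 34 + θ ^ 32 - θ ^ 30 + θ ^ 28 + θ ^ 16 - θ ^ 14 + θ ^ 12 + 2 * θ ^ 11 - θ ^ 10 - 2 * θ ^ 9 + θ ^ 8 + 2 * θ ^ 7 - 2 * θ ^ 5 + 2 * θ ^ 3) * hθ
  rw [← psum_mul n _ _ (lf_ne _ _ _) (lf_ne _ _ _), red θ hθ, red (-θ) (by rw [← hθ]; ring)]
  have hh : (C θ : ℂ[X]) ^ 2 = -1 := by rw [← C_pow, hθ]; simp
  have e : ∀ G : ℂ[X], G = X * X * (X * X) * P21.comp (-X) → psum n G = -psum n P21 := by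
    rintro _ rfl
    simp only [psum_mul, ne21, ne41, X_ne_zero, ne_eq, mul_eq_zero, comp_neg_X_eq_zero_iff,
      or_self, not_false_eq_true, psum_neg n hn, psum_X n hn]
    ring
  apply e
  simp only [P21, P41, add_comp, mul_comp, pow_comp, X_comp, ofNat_comp]
  simp only [cub, map_add, map_sub, map_mul, map_neg, map_pow, map_one, map_ofNat, map_zero]
  linear_combination (-X ^ 4) * hh

theorem quad_5n (n : ℕ) (hn : Odd n) (η : ℂ) (hη : η ^ 4 = -1) :
    psum n (lf 5 (-1) η) + psum n (lf 5 (-1) (-η)) + psum n (lf 5 (-1) (η ^ 3))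
      + psum n (lf 5 (-1) (-η ^ 3)) = psum n P82 := by
  rw [quad n _ (lf_ne 5 (-1)) _ _ pair_5n η hη]
  have e : ∀ G : ℂ[X], G = P82 * ((X ^ 2 - 2) * (X ^ 2 - 2)) → psum n G = psum n P82 := by
    rintro _ rfl
    simp only [psum_mul, ne21, ne81, ne82, nep, nem, ne_eq, mul_eq_zero, comp_neg_X_eq_zero_iff,
      or_self, not_false_eq_true, psum_neg n hn, psum_p n hn, psum_m n hn]
    ring
  apply e
  simp only [P21, P81, P82, add_comp, mul_comp, pow_comp, X_comp, ofNat_comp]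
  ring

theorem dbl_5n (n : ℕ) (hn : Odd n) (θ : ℂ) (hθ : θ ^ 2 = -1) :
    psum n (lf 5 (-1) θ) + psum n (lf 5 (-1) (-θ)) = -psum n P41 := by
  have red : ∀ θ : ℂ, θ ^ 2 = -1 → lf 5 (-1) θ =
      cub (θ - 1) (-2 * θ) (0) := by
    intro θ hθ
    unfold lf
    congr 1
    · linear_combination (θ ^ 4 - θ ^ 2 + 1) * hθ
    · linear_combination (-θ ^ 35 + θ ^ 33 - θ ^ 31 + θ ^ 29 - θ ^ 27 + θ ^ 25 - θ ^ 23 + θ ^ 21 - θ ^ 19 + θ ^ 17 - θ ^ 15 + θ ^ 13 - θ ^ 11 + θ ^ 10 + θ ^ 9 - θ ^ 8 - θ ^ 7 + θ ^ 6 + 2 * θ ^ 5 - θ ^ 4 - 2 * θ ^ 3 + θ ^ 2 + 2 * θ) * hθ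
    · linear_combination (-θ ^ 36 + θ ^ 34 - θ ^ 32 + θ ^ 30 - θ ^ 28 + θ ^ 16 - θ ^ 14 + θ ^ 12 - θ ^ 10 + θ ^ 8) * hθ
  rw [← psum_mul n _ _ (lf_ne _ _ _) (lf_ne _ _ _), red θ hθ, red (-θ) (by rw [← hθ]; ring)]
  have hh : (C θ : ℂ[X]) ^ 2 = -1 := by rw [← C_pow, hθ]; simp
  have e : ∀ G : ℂ[X], G = X * X * P41.comp (-X) → psum n G = -psum n P41 := by
    rintro _ rfl
    simp only [psum_mul, ne21, ne41, X_ne_zero, ne_eq, mul_eq_zero, comp_neg_X_eq_zero_iff,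
      or_self, not_false_eq_true, psum_neg n hn, psum_X n hn]
    ring
  apply e
  simp only [P21, P41, add_comp, mul_comp, pow_comp, X_comp, ofNat_comp]
  simp only [cub, map_add, map_sub, map_mul, map_neg, map_pow, map_one, map_ofNat, map_zero]
  linear_combination (-X ^ 4 + 4 * X ^ 3 - 4 * X ^ 2) * hh

theorem quad_3p (n : ℕ) (hn : Odd n) (η : ℂ) (hη : η ^ 4 = -1) :
    psum n (lf 3 1 η) + psum n (lf 3 1 (-η)) + psum n (lf 3 1 (η ^ 3))
      + psum n (lf 3 1 (-η ^ 3)) = -2 * psum n P21 - psum n P82 := by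
  rw [quad n _ (lf_ne 3 1) _ _ pair_3p η hη]
  have e : ∀ G : ℂ[X], G = P21.comp (-X) * P21.comp (-X) * P82.comp (-X) → psum n G = -2 * psum n P21 - psum n P82 := by
    rintro _ rfl
    simp only [psum_mul, ne21, ne81, ne82, nep, nem, ne_eq, mul_eq_zero, comp_neg_X_eq_zero_iff,
      or_self, not_false_eq_true, psum_neg n hn, psum_p n hn, psum_m n hn]
    ring
  apply e
  simp only [P21, P81, P82, add_comp, mul_comp, pow_comp, X_comp, ofNat_comp]
  ring

theorem dbl_3p (n : ℕ) (hn : Odd n) (θ : ℂ) (hθ : θ ^ 2 = -1) :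
    psum n (lf 3 1 θ) + psum n (lf 3 1 (-θ)) = psum n P21 := by
  have red : ∀ θ : ℂ, θ ^ 2 = -1 → lf 3 1 θ =
      cub (θ + 1) (0) (0) := by
    intro θ hθ
    unfold lf
    congr 1
    · linear_combination (θ ^ 2 - 1) * hθ
    · linear_combination (θ ^ 21 - θ ^ 19 + θ ^ 17 - θ ^ 15 + θ ^ 13 - θ ^ 11 + θ ^ 9 - θ ^ 7 + θ ^ 6 + θ ^ 5 - θ ^ 4 + θ ^ 2) * hθ
    · linear_combination (θ ^ 22 - θ ^ 20 + θ ^ 18 + θ ^ 10 - θ ^ 8 + 2 * θ ^ 7 + θ ^ 6 - 2 * θ ^ 5 + 2 * θ ^ 3) * hθ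
  rw [← psum_mul n _ _ (lf_ne _ _ _) (lf_ne _ _ _), red θ hθ, red (-θ) (by rw [← hθ]; ring)]
  have hh : (C θ : ℂ[X]) ^ 2 = -1 := by rw [← C_pow, hθ]; simp
  have e : ∀ G : ℂ[X], G = X * X * (X * X) * P21 → psum n G = psum n P21 := by
    rintro _ rfl
    simp only [psum_mul, ne21, ne41, X_ne_zero, ne_eq, mul_eq_zero, comp_neg_X_eq_zero_iff,
      or_self, not_false_eq_true, psum_neg n hn, psum_X n hn]
    ring
  apply e
  simp only [P21, P41, add_comp, mul_comp, pow_comp, X_comp, ofNat_comp]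
  simp only [cub, map_add, map_sub, map_mul, map_neg, map_pow, map_one, map_ofNat, map_zero]
  linear_combination (-X ^ 4) * hh

theorem quad_3n (n : ℕ) (hn : Odd n) (η : ℂ) (hη : η ^ 4 = -1) :
    psum n (lf 3 (-1) η) + psum n (lf 3 (-1) (-η)) + psum n (lf 3 (-1) (η ^ 3))
      + psum n (lf 3 (-1) (-η ^ 3)) = -psum n P81 := by
  rw [quad n _ (lf_ne 3 (-1)) _ _ pair_3n η hη]
  have e : ∀ G : ℂ[X], G = P81.comp (-X) * ((X ^ 2 + 2) * (X ^ 2 + 2)) → psum n G = -psum n P81 := by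
    rintro _ rfl
    simp only [psum_mul, ne21, ne81, ne82, nep, nem, ne_eq, mul_eq_zero, comp_neg_X_eq_zero_iff,
      or_self, not_false_eq_true, psum_neg n hn, psum_p n hn, psum_m n hn]
    ring
  apply e
  simp only [P21, P81, P82, add_comp, mul_comp, pow_comp, X_comp, ofNat_comp]
  ring

theorem dbl_3n (n : ℕ) (hn : Odd n) (θ : ℂ) (hθ : θ ^ 2 = -1) :
    psum n (lf 3 (-1) θ) + psum n (lf 3 (-1) (-θ)) = psum n P41 := by
  have red : ∀ θ : ℂ, θ ^ 2 = -1 → lf 3 (-1) θ =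
      cub (θ + 1) (2 * θ) (0) := by
    intro θ hθ
    unfold lf
    congr 1
    · linear_combination (θ ^ 2 - 1) * hθ
    · linear_combination (-θ ^ 21 + θ ^ 19 - θ ^ 17 + θ ^ 15 - θ ^ 13 + θ ^ 11 - θ ^ 9 + θ ^ 7 + θ ^ 6 - θ ^ 5 - θ ^ 4 + 2 * θ ^ 3 + θ ^ 2 - 2 * θ) * hθ
    · linear_combination (-θ ^ 22 + θ ^ 20 - θ ^ 18 + θ ^ 10 - θ ^ 8 + θ ^ 6) * hθ
  rw [← psum_mul n _ _ (lf_ne _ _ _) (lf_ne _ _ _), red θ hθ, red (-θ) (by rw [← hθ]; ring)]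
  have hh : (C θ : ℂ[X]) ^ 2 = -1 := by rw [← C_pow, hθ]; simp
  have e : ∀ G : ℂ[X], G = X * X * P41 → psum n G = psum n P41 := by
    rintro _ rfl
    simp only [psum_mul, ne21, ne41, X_ne_zero, ne_eq, mul_eq_zero, comp_neg_X_eq_zero_iff,
      or_self, not_false_eq_true, psum_neg n hn, psum_X n hn]
    ring
  apply e
  simp only [P21, P41, add_comp, mul_comp, pow_comp, X_comp, ofNat_comp]
  simp only [cub, map_add, map_sub, map_mul, map_neg, map_pow, map_one, map_ofNat, map_zero]
  linear_combination (-X ^ 4 - 4 * X ^ 3 - 4 * X ^ 2) * hh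

theorem quad_1p (n : ℕ) (hn : Odd n) (η : ℂ) (hη : η ^ 4 = -1) :
    psum n (lf 1 1 η) + psum n (lf 1 1 (-η)) + psum n (lf 1 1 (η ^ 3))
      + psum n (lf 1 1 (-η ^ 3)) = psum n P81 - 2 * psum n P21 := by
  rw [quad n _ (lf_ne 1 1) _ _ pair_1p η hη]
  have e : ∀ G : ℂ[X], G = P81 * (P21.comp (-X) * P21.comp (-X)) → psum n G = psum n P81 - 2 * psum n P21 := by
    rintro _ rfl
    simp only [psum_mul, ne21, ne81, ne82, nep, nem, ne_eq, mul_eq_zero, comp_neg_X_eq_zero_iff,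
      or_self, not_false_eq_true, psum_neg n hn, psum_p n hn, psum_m n hn]
    ring
  apply e
  simp only [P21, P81, P82, add_comp, mul_comp, pow_comp, X_comp, ofNat_comp]
  ring

theorem dbl_1p (n : ℕ) (hn : Odd n) (θ : ℂ) (hθ : θ ^ 2 = -1) :
    psum n (lf 1 1 θ) + psum n (lf 1 1 (-θ)) = -psum n P21 := by
  have red : ∀ θ : ℂ, θ ^ 2 = -1 → lf 1 1 θ =
      cub (θ - 1) (0) (0) := by
    intro θ hθ
    unfold lf
    congr 1
    · linear_combination (1) * hθ
    · linear_combination (θ ^ 7 - θ ^ 5 + θ ^ 3 + θ ^ 2) * hθ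
    · linear_combination (θ ^ 8 + θ ^ 4 + 2 * θ ^ 3) * hθ
  rw [← psum_mul n _ _ (lf_ne _ _ _) (lf_ne _ _ _), red θ hθ, red (-θ) (by rw [← hθ]; ring)]
  have hh : (C θ : ℂ[X]) ^ 2 = -1 := by rw [← C_pow, hθ]; simp
  have e : ∀ G : ℂ[X], G = X * X * (X * X) * P21.comp (-X) → psum n G = -psum n P21 := by
    rintro _ rfl
    simp only [psum_mul, ne21, ne41, X_ne_zero, ne_eq, mul_eq_zero, comp_neg_X_eq_zero_iff,
      or_self, not_false_eq_true, psum_neg n hn, psum_X n hn]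
    ring
  apply e
  simp only [P21, P41, add_comp, mul_comp, pow_comp, X_comp, ofNat_comp]
  simp only [cub, map_add, map_sub, map_mul, map_neg, map_pow, map_one, map_ofNat, map_zero]
  linear_combination (-X ^ 4) * hh

theorem quad_1n (n : ℕ) (hn : Odd n) (η : ℂ) (hη : η ^ 4 = -1) :
    psum n (lf 1 (-1) η) + psum n (lf 1 (-1) (-η)) + psum n (lf 1 (-1) (η ^ 3))
      + psum n (lf 1 (-1) (-η ^ 3)) = -psum n P82 := by
  rw [quad n _ (lf_ne 1 (-1)) _ _ pair_1n η hη]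
  have e : ∀ G : ℂ[X], G = P82.comp (-X) * ((X ^ 2 - 2) * (X ^ 2 - 2)) → psum n G = -psum n P82 := by
    rintro _ rfl
    simp only [psum_mul, ne21, ne81, ne82, nep, nem, ne_eq, mul_eq_zero, comp_neg_X_eq_zero_iff,
      or_self, not_false_eq_true, psum_neg n hn, psum_p n hn, psum_m n hn]
    ring
  apply e
  simp only [P21, P81, P82, add_comp, mul_comp, pow_comp, X_comp, ofNat_comp]
  ring

theorem dbl_1n (n : ℕ) (hn : Odd n) (θ : ℂ) (hθ : θ ^ 2 = -1) :
    psum n (lf 1 (-1) θ) + psum n (lf 1 (-1) (-θ)) = -psum n P41 := by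
  have red : ∀ θ : ℂ, θ ^ 2 = -1 → lf 1 (-1) θ =
      cub (θ - 1) (-2 * θ) (0) := by
    intro θ hθ
    unfold lf
    congr 1
    · linear_combination (1) * hθ
    · linear_combination (-θ ^ 7 + θ ^ 5 - θ ^ 3 + θ ^ 2 + 2 * θ) * hθ
    · linear_combination (-θ ^ 8 + θ ^ 4) * hθ
  rw [← psum_mul n _ _ (lf_ne _ _ _) (lf_ne _ _ _), red θ hθ, red (-θ) (by rw [← hθ]; ring)]
  have hh : (C θ : ℂ[X]) ^ 2 = -1 := by rw [← C_pow, hθ]; simp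
  have e : ∀ G : ℂ[X], G = X * X * P41.comp (-X) → psum n G = -psum n P41 := by
    rintro _ rfl
    simp only [psum_mul, ne21, ne41, X_ne_zero, ne_eq, mul_eq_zero, comp_neg_X_eq_zero_iff,
      or_self, not_false_eq_true, psum_neg n hn, psum_X n hn]
    ring
  apply e
  simp only [P21, P41, add_comp, mul_comp, pow_comp, X_comp, ofNat_comp]
  simp only [cub, map_add, map_sub, map_mul, map_neg, map_pow, map_one, map_ofNat, map_zero]
  linear_combination (-X ^ 4 + 4 * X ^ 3 - 4 * X ^ 2) * hh

/-- Sum over the eight eighth roots of unity. -/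
def S8 (η : ℂ) (g : ℂ → ℂ) : ℂ :=
  g 1 + g (-1) + (g (η ^ 2) + g (-η ^ 2)) + (g η + g (-η) + g (η ^ 3) + g (-η ^ 3))

theorem S8_add (η : ℂ) (g h : ℂ → ℂ) : S8 η (fun x => g x + h x) = S8 η g + S8 η h := by
  unfold S8; ring

theorem S8_mul (η : ℂ) (g : ℂ → ℂ) (c : ℂ) : S8 η (fun x => g x * c) = S8 η g * c := by
  unfold S8; ring

theorem S8_sum {ι : Type} (s : Finset ι) (η : ℂ) (g : ι → ℂ → ℂ) :
    S8 η (fun x => ∑ i ∈ s, g i x) = ∑ i ∈ s, S8 η (g i) := by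
  unfold S8; simp only [Finset.sum_add_distrib]

theorem S8_congr (η : ℂ) (g h : ℂ → ℂ) (hη : η ^ 4 = -1)
    (H : ∀ x, x ^ 8 = 1 → g x = h x) : S8 η g = S8 η h := by
  have e8 : η ^ 8 = 1 := by linear_combination (η ^ 4 - 1) * hη
  unfold S8
  rw [H 1 (by norm_num), H (-1) (by norm_num), H η e8, H (-η) (by rw [Even.neg_pow (by decide)]; exact e8),
    H (η ^ 2) (by rw [← pow_mul, mul_comm, pow_mul, e8, one_pow]),
    H (-η ^ 2) (by rw [Even.neg_pow (by decide), ← pow_mul, mul_comm, pow_mul, e8, one_pow]),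
    H (η ^ 3) (by rw [← pow_mul, mul_comm, pow_mul, e8, one_pow]),
    H (-η ^ 3) (by rw [Even.neg_pow (by decide), ← pow_mul, mul_comm, pow_mul, e8, one_pow])]

theorem S8_pow (η : ℂ) (hη : η ^ 4 = -1) (N : ℕ) :
    S8 η (fun x => x ^ N) = if N % 8 = 0 then 8 else 0 := by
  have : S8 η (fun x => x ^ N) = S8 η (fun x => x ^ (N % 8)) :=
    S8_congr η _ _ hη (fun x hx => pow_congr_mod hx (by simp))
  rw [this]
  have hr : N % 8 < 8 := Nat.mod_lt _ (by norm_num)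
  generalize N % 8 = r at hr ⊢
  unfold S8
  interval_cases r
  · norm_num
  · norm_num
  · norm_num; linear_combination 2 * (1 + η ^ 2) * hη
  · norm_num; ring
  · norm_num; linear_combination 2 * (1 + η ^ 8) * hη
  · norm_num; ring
  · norm_num; linear_combination 2 * (1 + η ^ 6) * (1 - η ^ 4 + η ^ 8) * hη
  · norm_num; ring

theorem sg_orth : ∀ s : ℕ, s < 2 → (1 : ℂ) ^ s + (-1) ^ s = if s = 0 then 2 else 0 := by
  intro s hs
  interval_cases s <;> norm_num

theorem lam_psi (m : ℕ) (θ ε : ℂ) (hθ : θ ^ 8 = 1) (hε : ε ^ 2 = 1)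
    (h : (1 + ε) * ((1 + θ ^ m) * (1 + θ ^ (2 * m)) * (1 + θ ^ (4 * m))) = 0)
    (n : ℕ) (hn : 1 ≤ n) : Lam (psi m θ ε) n = - psum n (lf m ε θ) := by
  rw [Lam_eq_psum (psi_isMul m θ ε hθ hε) (cs_zero m θ ε h) n hn, cs_one, cs_two, cs_three, lf]

theorem van1 (m : ℕ) (hm : Odd m) (θ ε : ℂ) (h : θ = -1) :
    (1 + ε) * ((1 + θ ^ m) * (1 + θ ^ (2 * m)) * (1 + θ ^ (4 * m))) = 0 := by
  rw [h, hm.neg_one_pow]; ring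

theorem van2 (m : ℕ) (hm : Odd m) (θ ε : ℂ) (h : θ ^ 2 = -1) :
    (1 + ε) * ((1 + θ ^ m) * (1 + θ ^ (2 * m)) * (1 + θ ^ (4 * m))) = 0 := by
  rw [pow_mul θ 2, h, hm.neg_one_pow]; ring

theorem van4 (m : ℕ) (hm : Odd m) (θ ε : ℂ) (h : θ ^ 4 = -1) :
    (1 + ε) * ((1 + θ ^ m) * (1 + θ ^ (2 * m)) * (1 + θ ^ (4 * m))) = 0 := by
  rw [pow_mul θ 4, h, hm.neg_one_pow]; ring

theorem psum_X2 (n : ℕ) (hn : Odd n) (m : ℕ) (hm : Odd m) :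
    psum n (lf m (-1) 1) = psum n P21 := by
  have : lf m (-1) 1 = X * P21 := by
    simp [lf, cub, P21]
    ring
  rw [this, psum_mul _ _ _ X_ne_zero ne21, psum_X n hn, zero_add]

theorem psum_neg_p (n : ℕ) (hn : Odd n) (m : ℕ) (hm : Odd m) :
    psum n (lf m 1 (-1)) = 0 := by
  have h2 : (-1 : ℂ) ^ (2 * m) = 1 := by rw [pow_mul]; norm_num
  have h3 : (-1 : ℂ) ^ (3 * m) = -1 := by rw [pow_mul]; norm_num [hm.neg_one_pow]
  have h5 : (-1 : ℂ) ^ (5 * m) = -1 := by rw [pow_mul]; norm_num [hm.neg_one_pow]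
  have h7 : (-1 : ℂ) ^ (7 * m) = -1 := by rw [pow_mul]; norm_num [hm.neg_one_pow]
  have : lf m 1 (-1) = X ^ 3 := by
    rw [lf, h2, h3, h5, h7, hm.neg_one_pow]
    norm_num [cub]
  rw [this]
  simp [psum, Multiset.map_nsmul, Multiset.sum_nsmul, hn.pos.ne']

theorem psum_neg_n (n : ℕ) (hn : Odd n) (m : ℕ) (hm : Odd m) :
    psum n (lf m (-1) (-1)) = 0 := by
  have h2 : (-1 : ℂ) ^ (2 * m) = 1 := by rw [pow_mul]; norm_num
  have h3 : (-1 : ℂ) ^ (3 * m) = -1 := by rw [pow_mul]; norm_num [hm.neg_one_pow]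
  have h5 : (-1 : ℂ) ^ (5 * m) = -1 := by rw [pow_mul]; norm_num [hm.neg_one_pow]
  have h7 : (-1 : ℂ) ^ (7 * m) = -1 := by rw [pow_mul]; norm_num [hm.neg_one_pow]
  have : lf m (-1) (-1) = X * (X ^ 2 + 2) := by
    rw [lf, h2, h3, h5, h7, hm.neg_one_pow]
    norm_num [cub]
    rw [show (C 2 : ℂ[X]) = 2 from rfl]
    ring
  rw [this, psum_mul _ _ _ X_ne_zero nep, psum_X n hn, psum_p n hn, zero_add]

section E
variable {n : ℕ} {K : Type} [Field K] [Fintype K] [Algebra (ZMod 2) K]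

/-- The character sum over the field. -/
noncomputable def Tsum (n m : ℕ) (K : Type) [Field K] [Fintype K] [Algebra (ZMod 2) K]
    (ε θ : ℂ) : ℂ := ∑ a : K, psi m θ ε (chp n a)

theorem Tsum_one (m : ℕ) (hK : Fintype.card K = 2 ^ n) : Tsum n m K 1 1 = 2 ^ n := by
  simp [Tsum, psi, tf, Hf, hK]

theorem Tsum_eq (hn : 1 ≤ n) (m : ℕ) (hK : Fintype.card K = 2 ^ n) (θ ε : ℂ) (hθ : θ ^ 8 = 1)
    (hε : ε ^ 2 = 1)
    (h : (1 + ε) * ((1 + θ ^ m) * (1 + θ ^ (2 * m)) * (1 + θ ^ (4 * m))) = 0) :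
    Tsum n m K ε θ = - psum n (lf m ε θ) := by
  rw [Tsum, sum_chp hn hK (psi_isMul m θ ε hθ hε), lam_psi m θ ε hθ hε h n hn]

theorem cnt_eq (hn : 4 ≤ n) (hK : Fintype.card K = 2 ^ n) (m : ℕ) (η : ℂ) (hη : η ^ 4 = -1)
    (hdec : ∀ a b c d : ZMod 2, ((n + m * lgN a b c d) % 8 = 0 ∧ sgN a b c = 0) ↔
      (a = 1 ∧ b = 0 ∧ c = 0 ∧ d = 0)) :
    16 * (cnt4 n K 1 0 0 0 : ℂ) = S8 η (Tsum n m K 1) + S8 η (Tsum n m K (-1)) := by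
  classical
  have e : S8 η (Tsum n m K 1) + S8 η (Tsum n m K (-1))
      = ∑ a : K, (S8 η (fun x => psi m x 1 (chp n a)) + S8 η (fun x => psi m x (-1) (chp n a))) := by
    rw [Finset.sum_add_distrib, ← S8_sum, ← S8_sum]
    rfl
  have inj := (algebraMap (ZMod 2) K).injective
  have key : ∀ a : K, S8 η (fun x => psi m x 1 (chp n a)) + S8 η (fun x => psi m x (-1) (chp n a))
      = if (traceFn 2 n 1 a = 1 ∧ traceFn 2 n 2 a = 0 ∧
    traceFn 2 n 3 a = 0 ∧ traceFn 2 n 4 a = 0) then 16 else 0 := by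
    intro a
    rw [← chp_coeff hK a 1 (by omega), ← chp_coeff hK a 2 (by omega),
      ← chp_coeff hK a 3 (by omega), ← chp_coeff hK a 4 (by omega),
      map_eq_one_iff _ inj, map_eq_zero_iff _ inj, map_eq_zero_iff _ inj, map_eq_zero_iff _ inj]
    simp only [← hdec]
    obtain ⟨-, hd⟩ := (mem_mon _ _).1 (chp_mon hK a)
    unfold psi tf Hf
    rw [hd]
    generalize (chp n a).reverse.coeff 1 = t1
    generalize (chp n a).reverse.coeff 2 = t2
    generalize (chp n a).reverse.coeff 3 = t3
    generalize (chp n a).reverse.coeff 4 = t4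
    have hs : sgN t1 t2 t3 < 2 := ZMod.val_lt _
    generalize sgN t1 t2 t3 = s at hs ⊢
    generalize lgN t1 t2 t3 t4 = l
    simp only [← mul_assoc, ← pow_add]
    rw [S8_mul, S8_mul, ← mul_add, S8_pow η hη, sg_orth s hs]
    by_cases h1 : (n + m * l) % 8 = 0 <;> by_cases h2 : s = 0 <;> simp [h1, h2]
    norm_num
  rw [e, Finset.sum_congr rfl (fun a _ => key a), cnt4, Nat.card_eq_fintype_card,
    Fintype.card_subtype, ← Finset.sum_filter, Finset.sum_const, nsmul_eq_mul, mul_comm]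

theorem cnt_eq2 (hn : 4 ≤ n) (hodd : Odd n) (hK : Fintype.card K = 2 ^ n) (m : ℕ) (hm : Odd m)
    (η : ℂ) (hη : η ^ 4 = -1)
    (hdec : ∀ a b c d : ZMod 2, ((n + m * lgN a b c d) % 8 = 0 ∧ sgN a b c = 0) ↔
      (a = 1 ∧ b = 0 ∧ c = 0 ∧ d = 0)) :
    16 * (cnt4 n K 1 0 0 0 : ℂ) = 2 ^ n - (psum n P21
      + (psum n (lf m 1 (η ^ 2)) + psum n (lf m 1 (-η ^ 2)))
      + (psum n (lf m 1 η) + psum n (lf m 1 (-η)) + psum n (lf m 1 (η ^ 3))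
        + psum n (lf m 1 (-η ^ 3)))
      + (psum n (lf m (-1) (η ^ 2)) + psum n (lf m (-1) (-η ^ 2)))
      + (psum n (lf m (-1) η) + psum n (lf m (-1) (-η)) + psum n (lf m (-1) (η ^ 3))
        + psum n (lf m (-1) (-η ^ 3)))) := by
  rw [cnt_eq hn hK m η hη hdec]
  have h1 : 1 ≤ n := by omega
  have v1 : ∀ ε : ℂ, ε ^ 2 = 1 → Tsum n m K ε (-1) = - psum n (lf m ε (-1)) := fun ε hε =>
    Tsum_eq h1 m hK _ _ (by norm_num) hε (van1 m hm _ _ rfl)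
  have v2 : ∀ ε θ : ℂ, ε ^ 2 = 1 → θ ^ 2 = -1 → Tsum n m K ε θ = - psum n (lf m ε θ) :=
    fun ε θ hε hθ => Tsum_eq h1 m hK _ _
      (by rw [show θ ^ 8 = (θ ^ 2) ^ 4 by ring, hθ]; norm_num) hε (van2 m hm _ _ hθ)
  have v4 : ∀ ε θ : ℂ, ε ^ 2 = 1 → θ ^ 4 = -1 → Tsum n m K ε θ = - psum n (lf m ε θ) :=
    fun ε θ hε hθ => Tsum_eq h1 m hK _ _
      (by rw [show θ ^ 8 = (θ ^ 4) ^ 2 by ring, hθ]; norm_num) hε (van4 m hm _ _ hθ)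
  have w : Tsum n m K (-1) 1 = - psum n (lf m (-1) 1) :=
    Tsum_eq h1 m hK _ _ (by norm_num) (by norm_num) (by norm_num)
  have i2 : (η ^ 2) ^ 2 = -1 := by rw [← hη]; ring
  have i2' : (-η ^ 2) ^ 2 = -1 := by rw [← hη]; ring
  have i4 : (-η) ^ 4 = -1 := by rw [← hη]; ring
  have i3 : (η ^ 3) ^ 4 = -1 := by
    rw [show (η ^ 3) ^ 4 = (η ^ 4) ^ 3 by ring, hη]; norm_num
  have i3' : (-η ^ 3) ^ 4 = -1 := by
    rw [show (-η ^ 3) ^ 4 = (η ^ 4) ^ 3 by ring, hη]; norm_num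
  have p1 : (1 : ℂ) ^ 2 = 1 := by norm_num
  have p2 : (-1 : ℂ) ^ 2 = 1 := by norm_num
  unfold S8
  rw [Tsum_one m hK, v1 _ p1, v1 _ p2, w, v2 _ _ p1 i2, v2 _ _ p1 i2', v2 _ _ p2 i2, v2 _ _ p2 i2',
    v4 _ _ p1 hη, v4 _ _ p1 i4, v4 _ _ p1 i3, v4 _ _ p1 i3',
    v4 _ _ p2 hη, v4 _ _ p2 i4, v4 _ _ p2 i3, v4 _ _ p2 i3',
    psum_X2 n hodd m hm, psum_neg_p n hodd m hm, psum_neg_n n hodd m hm]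
  ring
end E

theorem rho21 (n : ℕ) : rho n d21 = psum n P21 := by
  simp [rho, psum, d21, P21]
theorem rho41 (n : ℕ) : rho n d41 = psum n P41 := by
  simp [rho, psum, d41, P41]
theorem rho81 (n : ℕ) : rho n d81 = psum n P81 := by
  simp [rho, psum, d81, P81]
theorem rho82 (n : ℕ) : rho n d82 = psum n P82 := by
  simp [rho, psum, d82, P82]

theorem dec_of (n m r : ℕ) (h : n % 8 = r)
    (H : ∀ a b c d : ZMod 2, ((r + m * lgN a b c d) % 8 = 0 ∧ sgN a b c = 0) ↔
      (a = 1 ∧ b = 0 ∧ c = 0 ∧ d = 0)) :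
    ∀ a b c d : ZMod 2, ((n + m * lgN a b c d) % 8 = 0 ∧ sgN a b c = 0) ↔
      (a = 1 ∧ b = 0 ∧ c = 0 ∧ d = 0) := by
  intro a b c d
  rw [← H, ← h, Nat.mod_add_mod]

theorem statement12 (n : ℕ) (hn : 4 ≤ n) (hodd : Odd n)
    (K : Type) [Field K] [Fintype K] (hK : Fintype.card K = 2 ^ n) :
    (n % 8 = 1 →
      (cnt4 n K 1 0 0 0 : ℂ)
        = 2 ^ (n - 4) - (1 / 16) * (4 * rho n d21 + rho n d41 + rho n d81 + rho n d82)) ∧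
    (n % 8 = 3 →
      (cnt4 n K 1 0 0 0 : ℂ)
        = 2 ^ (n - 4) - (1 / 16) * (2 * rho n d21 - rho n d41 - rho n d81 + rho n d82)) ∧
    (n % 8 = 5 →
      (cnt4 n K 1 0 0 0 : ℂ)
        = 2 ^ (n - 4) - (1 / 16) * (rho n d41 - rho n d81 - rho n d82)) ∧
    (n % 8 = 7 →
      (cnt4 n K 1 0 0 0 : ℂ)
        = 2 ^ (n - 4) - (1 / 16) * (-2 * rho n d21 - rho n d41 + rho n d81 - rho n d82)) := by
  have hc : CharP K 2 := by
    obtain ⟨p, hp⟩ := CharP.exists K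
    have hpp : p.Prime := (CharP.char_is_prime_or_zero K p).resolve_right
      (fun h0 => CharP.char_ne_zero_of_finite K p h0)
    have hz : ((2 ^ n : ℕ) : K) = 0 := by rw [← hK]; exact FiniteField.cast_card_eq_zero K
    have h2 : p ∣ 2 ^ n := (CharP.cast_eq_zero_iff K p _).1 hz
    have h3 : p = 2 := (Nat.prime_dvd_prime_iff_eq hpp Nat.prime_two).1 (hpp.dvd_of_dvd_pow h2)
    exact h3 ▸ hp
  letI : Algebra (ZMod 2) K := ZMod.algebra K 2
  obtain ⟨η, hη⟩ := IsAlgClosed.exists_pow_nat_eq (-1 : ℂ) (n := 4) (by norm_num)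
  have i2 : (η ^ 2) ^ 2 = -1 := by rw [← hη]; ring
  have hpow : (2 : ℂ) ^ n = 16 * 2 ^ (n - 4) := by
    rw [show (16 : ℂ) = 2 ^ 4 by norm_num, ← pow_add]
    congr 1; omega
  rw [rho21, rho41, rho81, rho82]
  refine ⟨fun h => ?_, fun h => ?_, fun h => ?_, fun h => ?_⟩
  · have e := cnt_eq2 hn hodd hK 7 (by decide) η hη (dec_of n 7 1 h (by decide))
    rw [quad_7p n hodd η hη, quad_7n n hodd η hη, dbl_7p n hodd _ i2, dbl_7n n hodd _ i2,
      hpow] at e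
    linear_combination (1 / 16) * e
  · have e := cnt_eq2 hn hodd hK 5 (by decide) η hη (dec_of n 5 3 h (by decide))
    rw [quad_5p n hodd η hη, quad_5n n hodd η hη, dbl_5p n hodd _ i2, dbl_5n n hodd _ i2,
      hpow] at e
    linear_combination (1 / 16) * e
  · have e := cnt_eq2 hn hodd hK 3 (by decide) η hη (dec_of n 3 5 h (by decide))
    rw [quad_3p n hodd η hη, quad_3n n hodd η hη, dbl_3p n hodd _ i2, dbl_3n n hodd _ i2,
      hpow] at e
    linear_combination (1 / 16) * e
  · have e := cnt_eq2 hn hodd hK 1 (by decide) η hη (dec_of n 1 7 h (by decide))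
    rw [quad_1p n hodd η hη, quad_1n n hodd η hη, dbl_1p n hodd _ i2, dbl_1n n hodd _ i2,
      hpow] at e
    linear_combination (1 / 16) * e
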